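/- arXiv:1908.03666 — 4 statements merged into one kernel-verified Lean document; each statement's English description precedes it below -/
import Mathlib

section
/- Let 0 < H < 1/2, 1/2 < α < 1 with α + H > 1, and let λ > 0, t > 0. Set φ(s) = (t-s)^{α-1} E_{α,α}(-λ (t-s)^α) for 0 < s < t. Then there exists a constant C > 0 (depending only on α and H, in particular independent of λ and t) such that ∫_0^t [ K_H(t,τ) φ(τ) + ∫_τ^t (φ(u) - φ(τ)) ∂K_H(u,τ)/∂u du ]² dτ ≤ C t^{2α+2H-2}. -/
open Real intervalIntegral

/-- The two-parameter Mittag-Leffler function (real arguments),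
with the convention `1/Γ = 0` at the poles of `Γ` (as in Mathlib's `Real.Gamma`). -/
noncomputable def mittagLeffler (α β x : ℝ) : ℝ :=
  ∑' k : ℕ, x ^ k / Real.Gamma ((k : ℝ) * α + β)

/-- The real Beta function `B(a,b) = Γ(a)Γ(b)/Γ(a+b)`. -/
noncomputable def realBeta (a b : ℝ) : ℝ :=
  Real.Gamma a * Real.Gamma b / Real.Gamma (a + b)

/-- The normalizing constant of the fBm kernel for `0 < H < 1/2`. -/
noncomputable def cH (H : ℝ) : ℝ :=
  ((2*H) / ((1 - 2*H) * realBeta (1 - 2*H) (H + 1/2))) ^ (1/2 : ℝ)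

/-- The fBm square integrable kernel `K_H(t,s)` for `0 < H < 1/2`. -/
noncomputable def KH (H t s : ℝ) : ℝ :=
  cH H * ((t/s) ^ (H - 1/2) * (t - s) ^ (H - 1/2)
    - (H - 1/2) * s ^ (1/2 - H) * ∫ u in s..t, u ^ (H - 3/2) * (u - s) ^ (H - 1/2))

/-- The partial derivative `∂K_H(u,s)/∂u` of the fBm kernel in its first variable. -/
noncomputable def dKH (H u s : ℝ) : ℝ :=
  cH H * (u/s) ^ (H - 1/2) * (u - s) ^ (H - 3/2)


/-- coefficients of `(1-z)^(-s)` -/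
noncomputable def PP (s : ℝ) (n : ℕ) : ℝ := ∏ j ∈ Finset.range n, ((s + j) / (j + 1))

lemma PP_zero (s : ℝ) : PP s 0 = 1 := by simp [PP]

lemma PP_succ (s : ℝ) (n : ℕ) : PP s (n+1) = PP s n * ((s + n) / (n + 1)) := by
  rw [PP, Finset.prod_range_succ]; rfl

lemma PP_nonneg {s : ℝ} (hs : 0 ≤ s) (n : ℕ) : 0 ≤ PP s n := by
  unfold PP; exact Finset.prod_nonneg fun j _ => by positivity

lemma PP_le {s : ℝ} (hs : 0 ≤ s) (n : ℕ) : PP s n ≤ (1 + s)^n := by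
  induction n with
  | zero => simp [PP_zero]
  | succ n ih =>
    rw [PP_succ, pow_succ]
    apply mul_le_mul ih _ (by positivity) (by positivity)
    rw [div_le_iff₀ (by positivity)]
    nlinarith [mul_nonneg hs (Nat.cast_nonneg n : (0:ℝ) ≤ n)]

lemma PP_zero_left (n : ℕ) : PP 0 (n+1) = 0 := by
  simp [PP, Finset.prod_range_succ']

lemma PP_neg {a : ℝ} (ha : 0 < a) (ha1 : a < 1) (n : ℕ) : PP (-a) (n+1) ≤ 0 := by
  rw [PP, Finset.prod_range_succ']
  apply mul_nonpos_of_nonneg_of_nonpos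
  · apply Finset.prod_nonneg
    intro j _
    push_cast
    apply div_nonneg <;> linarith [(Nat.cast_nonneg j : (0:ℝ) ≤ j)]
  · simp; exact ha.le

lemma choose_PP (s : ℝ) (n : ℕ) : Ring.choose (-s) n = (-1)^n * PP s n := by
  rw [Ring.choose_eq_smul, smul_eq_mul]
  induction n with
  | zero => simp [PP_zero]
  | succ n ih =>
    rw [PP_succ, pow_succ, descPochhammer_succ_right, Polynomial.smeval_mul]
    have : (n.factorial : ℝ) ≠ 0 := by positivity
    have h2 : (n : ℝ) + 1 ≠ 0 := by positivity
    rw [inv_mul_eq_iff_eq_mul₀ this] at ih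
    rw [ih, Nat.factorial_succ]
    simp [Polynomial.smeval_sub, Polynomial.smeval_natCast]
    field_simp
    ring

lemma PP_vander (s t : ℝ) (n : ℕ) :
    ∑ ij ∈ Finset.HasAntidiagonal.antidiagonal n, PP s ij.1 * PP t ij.2 = PP (s + t) n := by
  have h := Ring.add_choose_eq (r := -s) (s := -t) n (Commute.all _ _)
  rw [show -s + -t = -(s+t) by ring, choose_PP] at h
  have : ∑ ij ∈ Finset.HasAntidiagonal.antidiagonal n, Ring.choose (-s) ij.1 * Ring.choose (-t) ij.2
     = (-1)^n * ∑ ij ∈ Finset.HasAntidiagonal.antidiagonal n, PP s ij.1 * PP t ij.2 := by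
    rw [Finset.mul_sum]
    apply Finset.sum_congr rfl
    intro ij hij
    rw [Finset.HasAntidiagonal.mem_antidiagonal] at hij
    rw [choose_PP, choose_PP, ← hij, pow_add]; ring
  rw [this] at h
  exact (mul_left_cancel₀ (by positivity : ((-1:ℝ))^n ≠ 0) h).symm

lemma pos_lem {a ε : ℝ} (ha : 0 < a) (ha1 : a < 1) (hε : 0 < ε) (Y : ℕ → ℝ)
    (h : ∀ n, 0 ≤ ∑ ij ∈ Finset.HasAntidiagonal.antidiagonal n, PP (-a) ij.1 * Y ij.2 + ε * Y n) (n : ℕ) :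
    0 ≤ Y n := by
  induction n using Nat.strong_induction_on with
  | _ n ih =>
    have h1 := h n
    rw [Finset.Nat.sum_antidiagonal_eq_sum_range_succ (fun i j => PP (-a) i * Y j),
      Finset.sum_range_succ'] at h1
    have h2 : ∑ k ∈ Finset.range n, PP (-a) (k+1) * Y (n - (k+1)) ≤ 0 := by
      apply Finset.sum_nonpos
      intro k hk
      rw [Finset.mem_range] at hk
      exact mul_nonpos_of_nonpos_of_nonneg (PP_neg ha ha1 k) (ih _ (by omega))
    rw [PP_zero, Nat.sub_zero] at h1
    by_contra hn
    push Not at hn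
    nlinarith

lemma conv_lem (a : ℝ) (c s : ℕ → ℝ) (hs : ∀ j, Summable fun k => c k * PP (s k) j) (n : ℕ) :
    ∑ ij ∈ Finset.HasAntidiagonal.antidiagonal n, PP (-a) ij.1 * ∑' k, c k * PP (s k) ij.2
      = ∑' k, c k * PP (s k - a) n := by
  simp_rw [← tsum_mul_left]
  have hsum := Summable.tsum_finsetSum (s := Finset.HasAntidiagonal.antidiagonal n)
    (f := fun (ij : ℕ × ℕ) (k : ℕ) => PP (-a) ij.1 * (c k * PP (s k) ij.2))
    (fun ij _ => (hs ij.2).mul_left (PP (-a) ij.1))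
  rw [← hsum]
  congr 1; ext k
  rw [show s k - a = -a + s k by ring, ← PP_vander, Finset.mul_sum]
  exact Finset.sum_congr rfl fun _ _ => by ring

lemma summable_aux (m : ℕ) {ρ : ℝ} (h0 : 0 < ρ) (h1 : ρ < 1) :
    Summable fun k : ℕ => ((k:ℝ)+3)^m * ρ^k := by
  have h := summable_pow_mul_geometric_of_norm_lt_one m
    (r := ρ) (by rwa [Real.norm_of_nonneg h0.le])
  have h2 := ((summable_nat_add_iff 3).2 h).mul_right (ρ^3)⁻¹
  refine h2.congr fun k => ?_
  push_cast; rw [pow_add]; field_simp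

lemma summable_P {a ε : ℝ} (ha : 0 < a) (ha1 : a < 1) (hε : 0 < ε) (hε1 : ε < 1) (m : ℕ)
    (c : ℕ → ℝ) (hc : ∀ k, |c k| ≤ (k+1) * ε^k) (s : ℕ → ℝ) (hs0 : ∀ k, 0 ≤ s k)
    (hs : ∀ k, s k ≤ k + 2) :
    Summable fun k => c k * PP (s k) m := by
  refine Summable.of_norm_bounded (summable_aux (m+1) hε hε1) fun k => ?_
  rw [norm_mul, Real.norm_eq_abs, Real.norm_of_nonneg (PP_nonneg (hs0 k) m)]
  have : PP (s k) m ≤ ((k:ℝ)+3)^m := (PP_le (hs0 k) m).trans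
    (pow_le_pow_left₀ (by linarith [hs0 k]) (by linarith [hs k]) m)
  calc |c k| * PP (s k) m ≤ (((k:ℝ)+3) * ε^k) * ((k:ℝ)+3)^m := by
        apply mul_le_mul _ this (PP_nonneg (hs0 k) m) (by positivity)
        refine (hc k).trans ?_
        gcongr; norm_num
    _ = _ := by ring

noncomputable def GG (a ε : ℝ) (n : ℕ) : ℝ := ∑' k : ℕ, (-ε)^k * PP (a * (k+1)) n
noncomputable def WW (a ε : ℝ) (n : ℕ) : ℝ := ∑' k : ℕ, ((k+1) * (-ε)^k) * PP (a * (k+2)) n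


lemma sumG {a ε : ℝ} (ha : 0 < a) (ha1 : a < 1) (hε : 0 < ε) (hε1 : ε < 1) (n : ℕ) : Summable fun k : ℕ => (-ε)^k * PP (a * (k+1)) n := by
  apply summable_P ha ha1 hε hε1
  · intro k
    rw [abs_pow, abs_neg, abs_of_pos hε]
    nlinarith [pow_pos hε k, mul_nonneg (Nat.cast_nonneg k : (0:ℝ) ≤ k) (pow_pos hε k).le]
  · intro k; positivity
  · intro k; nlinarith [(Nat.cast_nonneg k : (0:ℝ) ≤ k)]

lemma sumW {a ε : ℝ} (ha : 0 < a) (ha1 : a < 1) (hε : 0 < ε) (hε1 : ε < 1) (n : ℕ) : Summable fun k : ℕ => ((k+1) * (-ε)^k) * PP (a * (k+2)) n := by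
  apply summable_P ha ha1 hε hε1
  · intro k
    rw [abs_mul, abs_pow, abs_neg, abs_of_pos hε, abs_of_nonneg (by positivity)]
  · intro k; positivity
  · intro k; nlinarith [(Nat.cast_nonneg k : (0:ℝ) ≤ k)]

lemma sumW' {a ε : ℝ} (ha : 0 < a) (ha1 : a < 1) (hε : 0 < ε) (hε1 : ε < 1) (n : ℕ) : Summable fun k : ℕ => ((k+1) * (-ε)^k) * PP (a * (k+1)) n := by
  apply summable_P ha ha1 hε hε1
  · intro k
    rw [abs_mul, abs_pow, abs_neg, abs_of_pos hε, abs_of_nonneg (by positivity)]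
  · intro k; positivity
  · intro k; nlinarith [(Nat.cast_nonneg k : (0:ℝ) ≤ k)]

lemma sumG' {a ε : ℝ} (ha : 0 < a) (ha1 : a < 1) (hε : 0 < ε) (hε1 : ε < 1) (n : ℕ) : Summable fun k : ℕ => (-ε)^k * PP (a * k) n := by
  apply summable_P ha ha1 hε hε1
  · intro k
    rw [abs_pow, abs_neg, abs_of_pos hε]
    nlinarith [pow_pos hε k, mul_nonneg (Nat.cast_nonneg k : (0:ℝ) ≤ k) (pow_pos hε k).le]
  · intro k; positivity
  · intro k; nlinarith [(Nat.cast_nonneg k : (0:ℝ) ≤ k)]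

lemma G_eq {a ε : ℝ} (ha : 0 < a) (ha1 : a < 1) (hε : 0 < ε) (hε1 : ε < 1) (n : ℕ) :
    ∑ ij ∈ Finset.HasAntidiagonal.antidiagonal n, PP (-a) ij.1 * GG a ε ij.2 + ε * GG a ε n = PP 0 n := by
  unfold GG
  rw [conv_lem a (fun k => (-ε)^k) (fun k => a * (k+1)) (sumG ha ha1 hε hε1)]
  have : ∀ k : ℕ, a * ((k:ℝ)+1) - a = a * k := fun k => by ring
  simp_rw [this]
  rw [(sumG' ha ha1 hε hε1 n).tsum_eq_zero_add, ← tsum_mul_left, add_assoc,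
    ← ((summable_nat_add_iff 1).2 (sumG' ha ha1 hε hε1 n)).tsum_add
      ((sumG ha ha1 hε hε1 n).mul_left ε)]
  have : ∀ k : ℕ, (-ε)^(k+1) * PP (a * ((k+1 : ℕ):ℝ)) n + ε * ((-ε)^k * PP (a * (k+1)) n) = 0 := by
    intro k; push_cast; ring
  simp_rw [this]
  simp

lemma W_eq {a ε : ℝ} (ha : 0 < a) (ha1 : a < 1) (hε : 0 < ε) (hε1 : ε < 1) (n : ℕ) :
    ∑ ij ∈ Finset.HasAntidiagonal.antidiagonal n, PP (-a) ij.1 * WW a ε ij.2 + ε * WW a ε n = GG a ε n := by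
  unfold WW GG
  rw [conv_lem a (fun k => (k+1)*(-ε)^k) (fun k => a * (k+2)) (sumW ha ha1 hε hε1)]
  have : ∀ k : ℕ, a * ((k:ℝ)+2) - a = a * (k + 1) := fun k => by ring
  simp_rw [this]
  rw [(sumW' ha ha1 hε hε1 n).tsum_eq_zero_add, (sumG ha ha1 hε hε1 n).tsum_eq_zero_add,
    ← tsum_mul_left, add_assoc,
    ← ((summable_nat_add_iff 1).2 (sumW' ha ha1 hε hε1 n)).tsum_add
      ((sumW ha ha1 hε hε1 n).mul_left ε)]
  congr 1
  · simp
  · congr 1; ext k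
    push_cast; rw [show (k:ℝ)+1+1 = k+2 by ring]; ring

lemma PPa_eq (a : ℝ) (n : ℕ) :
    ∑ ij ∈ Finset.HasAntidiagonal.antidiagonal n, PP (-a) ij.1 * PP a ij.2 = PP 0 n := by
  rw [PP_vander]; simp

lemma G_nonneg {a ε : ℝ} (ha : 0 < a) (ha1 : a < 1) (hε : 0 < ε) (hε1 : ε < 1) (n : ℕ) : 0 ≤ GG a ε n := by
  apply pos_lem ha ha1 hε
  intro n
  rw [G_eq ha ha1 hε hε1]
  exact PP_nonneg le_rfl n

lemma G_le {a ε : ℝ} (ha : 0 < a) (ha1 : a < 1) (hε : 0 < ε) (hε1 : ε < 1) (n : ℕ) : GG a ε n ≤ PP a n := by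
  have := pos_lem ha ha1 hε (fun n => PP a n - GG a ε n) (fun n => by
    have h1 := G_eq ha ha1 hε hε1 n
    have h2 := PPa_eq a n
    simp_rw [mul_sub, Finset.sum_sub_distrib]
    nlinarith [PP_nonneg ha.le n]) n
  linarith

lemma W_nonneg {a ε : ℝ} (ha : 0 < a) (ha1 : a < 1) (hε : 0 < ε) (hε1 : ε < 1) (n : ℕ) : 0 ≤ WW a ε n := by
  apply pos_lem ha ha1 hε
  intro n
  rw [W_eq ha ha1 hε hε1]
  exact G_nonneg ha ha1 hε hε1 n

lemma W_le {a ε : ℝ} (ha : 0 < a) (ha1 : a < 1) (hε : 0 < ε) (hε1 : ε < 1) (n : ℕ) : ε * WW a ε n ≤ PP a n := by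
  have := pos_lem ha ha1 hε (fun n => PP a n - GG a ε n - ε * WW a ε n) (fun n => by
    have h1 := G_eq ha ha1 hε hε1 n
    have h2 := PPa_eq a n
    have h3 := W_eq ha ha1 hε hε1 n
    have h4 : ∑ ij ∈ Finset.HasAntidiagonal.antidiagonal n, PP (-a) ij.1 * (ε * WW a ε ij.2)
      = ε * ∑ ij ∈ Finset.HasAntidiagonal.antidiagonal n, PP (-a) ij.1 * WW a ε ij.2 := by
      rw [Finset.mul_sum]; exact Finset.sum_congr rfl fun _ _ => by ring
    simp_rw [mul_sub, Finset.sum_sub_distrib]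
    rw [h4]
    nlinarith [mul_nonneg hε.le (sub_nonneg.2 (G_le ha ha1 hε hε1 n))]) n
  linarith [G_nonneg ha ha1 hε hε1 n]

noncomputable def qq (s : ℝ) (n : ℕ) : ℝ := (s + n) * PP s n * (n:ℝ)^(-s)

lemma PP_prod (s : ℝ) (n : ℕ) : ∏ j ∈ Finset.range n, (s + (j:ℝ)) = PP s n * n.factorial := by
  induction n with
  | zero => simp [PP_zero]
  | succ n ih =>
    rw [Finset.prod_range_succ, ih, PP_succ, Nat.factorial_succ]
    push_cast; field_simp

lemma qq_eq (s : ℝ) (n : ℕ) : qq s n = (Real.GammaSeq s n)⁻¹ := by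
  rw [Real.GammaSeq, Finset.prod_range_succ, PP_prod, qq, Real.rpow_neg (by positivity)]
  have : (n.factorial : ℝ) ≠ 0 := by positivity
  rw [inv_div]
  field_simp

lemma qq_nonneg {s : ℝ} (hs : 0 < s) (n : ℕ) : 0 ≤ qq s n := by
  have := PP_nonneg hs.le n
  unfold qq; positivity

lemma qq_step {s : ℝ} (hs : 0 < s) {n : ℕ} (hn : 1 ≤ n) : qq s (n+1) ≤ qq s n := by
  have hn' : (0:ℝ) < n := by exact_mod_cast hn
  have hP := PP_nonneg hs.le n
  have h1 : (s + n + 1) / (n + 1) ≤ (((n:ℝ)+1)/n)^s := by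
    have h2 : 1 / ((n:ℝ)+1) ≤ Real.log (((n:ℝ)+1)/n) := by
      have := Real.one_sub_inv_le_log_of_pos (x := ((n:ℝ)+1)/n) (by positivity)
      refine le_trans (le_of_eq ?_) this
      field_simp; ring
    rw [Real.rpow_def_of_pos (by positivity)]
    calc (s + n + 1) / (n + 1) = s * (1/((n:ℝ)+1)) + 1 := by field_simp; ring
      _ ≤ Real.exp (s * (1/((n:ℝ)+1))) := Real.add_one_le_exp _
      _ ≤ _ := by
        apply Real.exp_le_exp.2
        rw [mul_comm (Real.log _)]
        gcongr
  rw [Real.div_rpow (by positivity) (by positivity)] at h1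
  unfold qq
  rw [PP_succ, Real.rpow_neg (by positivity), Real.rpow_neg (by positivity)]
  push_cast
  have e1 : 0 < ((n:ℝ)+1)^s := by positivity
  have e2 : 0 < (n:ℝ)^s := by positivity
  calc (s + (n+1)) * (PP s n * ((s+n)/(n+1))) * (((n:ℝ)+1)^s)⁻¹
      = ((s + n) * PP s n * (((n:ℝ)+1)^s)⁻¹) * ((s + n + 1) / (n + 1)) := by
        field_simp; ring
    _ ≤ ((s + n) * PP s n * (((n:ℝ)+1)^s)⁻¹) * (((n:ℝ)+1)^s / (n:ℝ)^s) := by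
        gcongr
    _ = _ := by field_simp

lemma qq_anti {s : ℝ} (hs : 0 < s) {M n : ℕ} (hM : 1 ≤ M) (hn : M ≤ n) : qq s n ≤ qq s M := by
  induction n, hn using Nat.le_induction with
  | base => exact le_rfl
  | succ n hn ih => exact (qq_step hs (hM.trans hn)).trans ih

lemma qq_tendsto {s : ℝ} (hs : 0 < s) :
    Filter.Tendsto (qq s) Filter.atTop (nhds (Real.Gamma s)⁻¹) := by
  have := (Real.GammaSeq_tendsto_Gamma s).inv₀ (Real.Gamma_pos_of_pos hs).ne'
  exact this.congr fun n => (qq_eq s n).symm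

lemma invGamma_le {s : ℝ} (hs : 0 < s) {M : ℕ} (hM : 1 ≤ M) : (Real.Gamma s)⁻¹ ≤ qq s M :=
  le_of_tendsto (qq_tendsto hs) (Filter.eventually_atTop.2 ⟨M, fun _ hn => qq_anti hs hM hn⟩)

lemma qq_le {s : ℝ} (hs : 0 < s) {M : ℕ} (hM : 1 ≤ M) :
    qq s M ≤ M * (1+s)^(M+1) * (M:ℝ)^(-s) := by
  have hM' : (1:ℝ) ≤ M := by exact_mod_cast hM
  unfold qq
  refine mul_le_mul_of_nonneg_right ?_ (by positivity)
  calc (s + M) * PP s M ≤ (M * (1 + s)) * (1+s)^M := by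
        apply mul_le_mul _ (PP_le hs.le M) (PP_nonneg hs.le M) (by positivity)
        nlinarith
    _ = _ := by ring

noncomputable def RR (s : ℝ) (n : ℕ) : ℝ := (n:ℝ)^(1-s) * PP s n

lemma RR_eq {s : ℝ} (hs : 0 < s) {n : ℕ} (hn : 1 ≤ n) : RR s n = (n / (n + s)) * qq s n := by
  have hn' : (0:ℝ) < n := by exact_mod_cast hn
  unfold RR qq
  rw [show (1 - s) = 1 + -s by ring, Real.rpow_add hn', Real.rpow_one]
  field_simp
  ring

lemma RR_nonneg {s : ℝ} (hs : 0 < s) (n : ℕ) : 0 ≤ RR s n := by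
  have := PP_nonneg hs.le n
  unfold RR; positivity

lemma RR_le {s : ℝ} (hs : 0 < s) {n : ℕ} (hn : 1 ≤ n) : RR s n ≤ qq s n := by
  rw [RR_eq hs hn]
  apply mul_le_of_le_one_left (qq_nonneg hs n)
  rw [div_le_one (by positivity)]
  linarith

lemma RR_tendsto {s : ℝ} (hs : 0 < s) :
    Filter.Tendsto (RR s) Filter.atTop (nhds (Real.Gamma s)⁻¹) := by
  have h := (tendsto_natCast_div_add_atTop s).mul (qq_tendsto hs)
  rw [one_mul] at h
  refine h.congr' ?_
  filter_upwards [Filter.eventually_ge_atTop 1] with n hn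
  exact (RR_eq hs hn).symm

lemma dom_exists {a x : ℝ} (ha : 0 < a) (hx : 0 < x) :
    ∃ (M : ℕ) (b : ℕ → ℝ), 1 ≤ M ∧ Summable b ∧ ∀ (k : ℕ) (s : ℝ), 0 < s → a * k ≤ s → s ≤ k + 2 →
      ((k:ℝ)+1) * x^k * qq s M ≤ b k := by
  obtain ⟨M, hM1, hM2⟩ : ∃ M : ℕ, 1 ≤ M ∧ x < (M:ℝ)^a := by
    have := (tendsto_rpow_atTop ha).comp tendsto_natCast_atTop_atTop
    exact ((Filter.eventually_ge_atTop 1).and (this.eventually_gt_atTop x)).exists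
  have hM' : (1:ℝ) ≤ M := by exact_mod_cast hM1
  have hM0 : (0:ℝ) < M := by linarith
  have hMa : 0 < (M:ℝ)^a := by positivity
  refine ⟨M, fun k => M * (((k:ℝ)+3)^(M+2) * (x / (M:ℝ)^a)^k), hM1,
    (summable_aux (M+2) (by positivity) ((div_lt_one hMa).2 hM2)).mul_left _, ?_⟩
  intro k s hs h1 h2
  have e1 : (M:ℝ)^(-s) ≤ (((M:ℝ)^a)^k)⁻¹ := by
    rw [← Real.rpow_natCast, ← Real.rpow_mul hM0.le, ← Real.rpow_neg hM0.le]
    exact Real.rpow_le_rpow_of_exponent_le hM' (by linarith)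
  calc ((k:ℝ)+1) * x^k * qq s M
      ≤ ((k:ℝ)+3) * x^k * (M * (k+3)^(M+1) * (((M:ℝ)^a)^k)⁻¹) := by
        refine mul_le_mul ?_ ((qq_le hs hM1).trans ?_) (qq_nonneg hs M) (by positivity)
        · gcongr; norm_num
        · have : 1 + s ≤ (k:ℝ) + 3 := by linarith
          gcongr
    _ = _ := by simp only [div_pow]; field_simp; ring

lemma dom_tendsto {a x : ℝ} (ha : 0 < a) (hx : 0 < x) (c s : ℕ → ℝ)
    (hc : ∀ k, |c k| ≤ (k+1) * x^k) (hs0 : ∀ k, 0 < s k) (hs1 : ∀ k : ℕ, a * k ≤ s k)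
    (hs2 : ∀ k : ℕ, s k ≤ k + 2) :
    Filter.Tendsto (fun n => ∑' k, c k * RR (s k) n) Filter.atTop
      (nhds (∑' k, c k * (Real.Gamma (s k))⁻¹)) := by
  obtain ⟨M, b, hM, hb, hd⟩ := dom_exists ha hx
  refine tendsto_tsum_of_dominated_convergence hb (fun k => (RR_tendsto (hs0 k)).const_mul _) ?_
  filter_upwards [Filter.eventually_ge_atTop M] with n hn k
  rw [norm_mul, Real.norm_eq_abs, Real.norm_of_nonneg (RR_nonneg (hs0 k) n)]
  refine le_trans ?_ (hd k (s k) (hs0 k) (hs1 k) (hs2 k))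
  exact mul_le_mul (hc k) ((RR_le (hs0 k) (hM.trans hn)).trans (qq_anti (hs0 k) hM hn))
    (RR_nonneg (hs0 k) n) (by positivity)

lemma dom_summable {a x : ℝ} (ha : 0 < a) (hx : 0 < x) (s : ℕ → ℝ)
    (hs0 : ∀ k, 0 < s k) (hs1 : ∀ k : ℕ, a * k ≤ s k)
    (hs2 : ∀ k : ℕ, s k ≤ k + 2) :
    Summable fun k : ℕ => ((k:ℝ)+1) * x^k * (Real.Gamma (s k))⁻¹ := by
  obtain ⟨M, b, hM, hb, hd⟩ := dom_exists ha hx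
  refine Summable.of_nonneg_of_le (fun k => ?_) (fun k => ?_) hb
  · have := Real.Gamma_pos_of_pos (hs0 k)
    positivity
  · refine le_trans ?_ (hd k (s k) (hs0 k) (hs1 k) (hs2 k))
    gcongr
    exact invGamma_le (hs0 k) hM

/-- derivative series -/
noncomputable def DD (a x : ℝ) : ℝ := ∑' k : ℕ, ((k+1) * (-x)^k) * (Real.Gamma (a * (k+2)))⁻¹

/-- basic function -/
noncomputable def EE (a x : ℝ) : ℝ := ∑' k : ℕ, (-x)^k * (Real.Gamma (a * (k+1)))⁻¹

lemma scaleG {a x : ℝ} {n : ℕ} (hn : 1 ≤ n) :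
    ∑' k : ℕ, (-x)^k * RR (a*(k+1)) n = (n:ℝ)^(1-a) * GG a (x * (n:ℝ)^(-a)) n := by
  have hn' : (0:ℝ) < n := by exact_mod_cast hn
  rw [GG, ← tsum_mul_left]
  congr 1; ext k
  unfold RR
  rw [show 1 - a * ((k:ℝ)+1) = (1 - a) + (-a)*k by ring, Real.rpow_add hn', Real.rpow_mul hn'.le,
    Real.rpow_natCast, ← neg_mul, mul_pow]
  ring

lemma scaleW {a x : ℝ} {n : ℕ} (hn : 1 ≤ n) :
    x * ∑' k : ℕ, ((k+1) * (-x)^k) * RR (a*(k+2)) n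
      = (n:ℝ)^(1-a) * ((x * (n:ℝ)^(-a)) * WW a (x * (n:ℝ)^(-a)) n) := by
  have hn' : (0:ℝ) < n := by exact_mod_cast hn
  rw [WW, ← tsum_mul_left, ← tsum_mul_left, ← tsum_mul_left]
  congr 1; ext k
  unfold RR
  rw [show 1 - a * ((k:ℝ)+2) = (1 - a) + (-a) + (-a)*k by ring, Real.rpow_add hn',
    Real.rpow_add hn', Real.rpow_mul hn'.le,
    Real.rpow_natCast, ← neg_mul, mul_pow]
  ring

lemma eps_ev {a x : ℝ} (ha : 0 < a) :
    ∀ᶠ n : ℕ in Filter.atTop, 1 ≤ n ∧ x * (n:ℝ)^(-a) < 1 := by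
  have := (tendsto_rpow_neg_atTop ha).comp tendsto_natCast_atTop_atTop
  have := this.const_mul x
  rw [mul_zero] at this
  exact (Filter.eventually_ge_atTop 1).and (this.eventually_lt_const one_pos)

lemma EE_tendsto {a x : ℝ} (ha : 0 < a) (ha1 : a < 1) (hx : 0 < x) :
    Filter.Tendsto (fun n : ℕ => ∑' k : ℕ, (-x)^k * RR (a*(k+1)) n) Filter.atTop
      (nhds (EE a x)) := by
  apply dom_tendsto ha hx (fun k => (-x)^k) (fun k => a*(k+1))
  · intro k
    rw [abs_pow, abs_neg, abs_of_pos hx]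
    nlinarith [pow_pos hx k, mul_nonneg (Nat.cast_nonneg k : (0:ℝ) ≤ k) (pow_pos hx k).le]
  · intro k; positivity
  · intro k; nlinarith
  · intro k; nlinarith [(Nat.cast_nonneg k : (0:ℝ) ≤ k)]

lemma DD_tendsto {a x : ℝ} (ha : 0 < a) (ha1 : a < 1) (hx : 0 < x) :
    Filter.Tendsto (fun n : ℕ => ∑' k : ℕ, ((k+1) * (-x)^k) * RR (a*(k+2)) n) Filter.atTop
      (nhds (DD a x)) := by
  apply dom_tendsto ha hx (fun k => (k+1) * (-x)^k) (fun k => a*(k+2))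
  · intro k
    rw [abs_mul, abs_pow, abs_neg, abs_of_pos hx, abs_of_nonneg (by positivity)]
  · intro k; positivity
  · intro k; nlinarith
  · intro k; nlinarith [(Nat.cast_nonneg k : (0:ℝ) ≤ k)]

lemma EE_nonneg {a x : ℝ} (ha : 0 < a) (ha1 : a < 1) (hx : 0 < x) : 0 ≤ EE a x := by
  refine ge_of_tendsto (EE_tendsto ha ha1 hx) ?_
  filter_upwards [eps_ev (x := x) ha] with n hn
  have hn' : (0:ℝ) < n := by exact_mod_cast hn.1
  rw [scaleG hn.1]
  exact mul_nonneg (by positivity) (G_nonneg ha ha1 (by positivity) hn.2 n)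

lemma EE_le {a x : ℝ} (ha : 0 < a) (ha1 : a < 1) (hx : 0 < x) : EE a x ≤ (Real.Gamma a)⁻¹ := by
  refine le_of_tendsto_of_tendsto (EE_tendsto ha ha1 hx) (RR_tendsto ha) ?_
  filter_upwards [eps_ev (x := x) ha] with n hn
  have hn' : (0:ℝ) < n := by exact_mod_cast hn.1
  rw [scaleG hn.1]
  exact mul_le_mul_of_nonneg_left (G_le ha ha1 (by positivity) hn.2 n) (by positivity)

lemma DD_nonneg {a x : ℝ} (ha : 0 < a) (ha1 : a < 1) (hx : 0 < x) : 0 ≤ x * DD a x := by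
  refine ge_of_tendsto ((DD_tendsto ha ha1 hx).const_mul x) ?_
  filter_upwards [eps_ev (x := x) ha] with n hn
  have hn' : (0:ℝ) < n := by exact_mod_cast hn.1
  rw [scaleW hn.1]
  have := W_nonneg ha ha1 (ε := x * (n:ℝ)^(-a)) (by positivity) hn.2 n
  positivity

lemma DD_le {a x : ℝ} (ha : 0 < a) (ha1 : a < 1) (hx : 0 < x) :
    x * DD a x ≤ (Real.Gamma a)⁻¹ := by
  refine le_of_tendsto_of_tendsto ((DD_tendsto ha ha1 hx).const_mul x) (RR_tendsto ha) ?_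
  filter_upwards [eps_ev (x := x) ha] with n hn
  have hn' : (0:ℝ) < n := by exact_mod_cast hn.1
  rw [scaleW hn.1]
  exact mul_le_mul_of_nonneg_left (W_le ha ha1 (by positivity) hn.2 n) (by positivity)

lemma EE_deriv {a x : ℝ} (ha : 0 < a) (ha1 : a < 1) (hx : 0 < x) :
    HasDerivAt (EE a) (- DD a x) x := by
  have hu := dom_summable ha (x := x + 1) (by linarith) (fun k => a*(k+2))
    (fun k => by positivity) (fun k => by nlinarith)
    (fun k => by nlinarith [(Nat.cast_nonneg k : (0:ℝ) ≤ k)])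
  have hu' : Summable fun k : ℕ => (k:ℝ) * (x+1)^(k-1) * (Real.Gamma (a*(k+1)))⁻¹ := by
    refine (summable_nat_add_iff 1).1 (hu.congr fun k => ?_)
    push_cast; rw [show (k:ℝ)+1+1 = k+2 by ring]
  have hG : ∀ k : ℕ, 0 < Real.Gamma (a*((k:ℝ)+1)) := fun k => Real.Gamma_pos_of_pos (by positivity)
  have hb : ∀ (k : ℕ) (y : ℝ), y ∈ Set.Ioo (0:ℝ) (x+1) →
      ‖-((k:ℝ) * (-y)^(k-1) * (Real.Gamma (a*(k+1)))⁻¹)‖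
        ≤ (k:ℝ) * (x+1)^(k-1) * (Real.Gamma (a*(k+1)))⁻¹ := by
    intro k y hy
    have := (hG k).le
    rw [norm_neg, norm_mul, norm_mul, norm_pow, norm_neg, Real.norm_of_nonneg hy.1.le,
      Real.norm_of_nonneg (inv_nonneg.2 this), Real.norm_of_nonneg (Nat.cast_nonneg k)]
    have h1 := hy.1.le
    have h2 := hy.2.le
    gcongr
  have hxm : x ∈ Set.Ioo (0:ℝ) (x+1) := ⟨hx, by linarith⟩
  have h0 : Summable fun k : ℕ => (-x)^k * (Real.Gamma (a * (k+1)))⁻¹ := by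
    have h1 := dom_summable ha (x := x) hx (fun k => a*(k+1))
      (fun k => by positivity) (fun k => by nlinarith)
      (fun k => by nlinarith [(Nat.cast_nonneg k : (0:ℝ) ≤ k)])
    refine Summable.of_norm_bounded h1 fun k => ?_
    rw [norm_mul, norm_pow, norm_neg, Real.norm_of_nonneg hx.le,
      Real.norm_of_nonneg (inv_nonneg.2 (hG k).le)]
    have := hG k
    gcongr
    nlinarith [pow_pos hx k, mul_nonneg (Nat.cast_nonneg k : (0:ℝ) ≤ k) (pow_pos hx k).le]
  have key := hasDerivAt_tsum_of_isPreconnected hu' isOpen_Ioo isPreconnected_Ioo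
    (g := fun (k : ℕ) (y : ℝ) => (-y)^k * (Real.Gamma (a * (k+1)))⁻¹)
    (g' := fun (k : ℕ) (y : ℝ) => -((k:ℝ) * (-y)^(k-1) * (Real.Gamma (a*(k+1)))⁻¹))
    (t := Set.Ioo (0:ℝ) (x+1)) (y₀ := x) (y := x)
    (fun k y hy => by
      have := ((hasDerivAt_id y).neg.pow k).mul_const (Real.Gamma (a * (k+1)))⁻¹
      refine this.congr_deriv ?_
      simp) hb hxm h0 hxm
  have hs : Summable fun k : ℕ => -((k:ℝ) * (-x)^(k-1) * (Real.Gamma (a*(k+1)))⁻¹) :=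
    Summable.of_norm_bounded hu' fun k => hb k x hxm
  rw [hs.tsum_eq_zero_add] at key
  refine key.congr_deriv ?_
  rw [DD, ← tsum_neg]
  simp only [Nat.cast_zero, zero_mul, neg_zero, zero_add]
  congr 1; ext k
  push_cast; rw [show (k:ℝ)+1+1 = k+2 by ring]

noncomputable def Bq (q p : ℝ) : ℝ := ∫ x in (0:ℝ)..1, x^q * (1-x)^p

lemma Bq_nonneg (q p : ℝ) : 0 ≤ Bq q p := by
  apply intervalIntegral.integral_nonneg zero_le_one
  intro x hx
  have h1 := hx.1
  have h2 : 0 ≤ 1 - x := by linarith [hx.2]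
  positivity

lemma beta_int {q p : ℝ} (hq : -1 < q) (hp : -1 < p) :
    IntervalIntegrable (fun x : ℝ => x^q * (1-x)^p) MeasureTheory.volume 0 1 := by
  have h := (Complex.betaIntegral_convergent (u := ((q+1 : ℝ) : ℂ)) (v := ((p+1 : ℝ):ℂ))
    (by simpa using by linarith) (by simpa using by linarith)).norm
  refine h.congr_uIoo ?_
  rw [Set.uIoo_of_le zero_le_one]
  intro x hx
  have h1 := hx.1
  have h2 : 0 < 1 - x := by linarith [hx.2]
  simp only [norm_mul]
  have e : (1 - (x:ℂ)) = ((1 - x : ℝ) : ℂ) := by push_cast; rfl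
  rw [e, Complex.norm_cpow_eq_rpow_re_of_pos h1, Complex.norm_cpow_eq_rpow_re_of_pos h2]
  simp

lemma beta_pt {q p a b u : ℝ} (hu : u ∈ Set.Ioo a b) :
    (b-a)^(q+p) * (((b-a)⁻¹ * (u-a))^q * (1 - (b-a)⁻¹ * (u-a))^p) = (u-a)^q * (b-u)^p := by
  have h1 : 0 < u - a := by linarith [hu.1]
  have h2 : 0 < b - u := by linarith [hu.2]
  have h3 : 0 < b - a := by linarith
  have e : 1 - (b-a)⁻¹ * (u-a) = (b-a)⁻¹ * (b-u) := by field_simp; ring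
  rw [e, Real.mul_rpow (by positivity) h1.le, Real.mul_rpow (by positivity) h2.le,
    Real.rpow_add h3, Real.inv_rpow h3.le, Real.inv_rpow h3.le]
  have := Real.rpow_pos_of_pos h3 q
  have := Real.rpow_pos_of_pos h3 p
  field_simp

lemma beta_int' {q p a b : ℝ} (hq : -1 < q) (hp : -1 < p) (hab : a < b) :
    IntervalIntegrable (fun u : ℝ => (u-a)^q * (b-u)^p) MeasureTheory.volume a b := by
  have h3 : 0 < b - a := by linarith
  have h := (((beta_int hq hp).comp_mul_left (c := (b-a)⁻¹)).comp_sub_right a).const_mul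
    ((b-a)^(q+p))
  simp only [zero_div, zero_add, one_div, inv_inv, sub_add_cancel] at h
  refine h.congr_uIoo ?_
  rw [Set.uIoo_of_le hab.le]
  intro u hu
  exact beta_pt hu

lemma beta_eq' (q p : ℝ) {a b : ℝ} (hab : a < b) :
    ∫ u in a..b, (u-a)^q * (b-u)^p = (b-a)^(q+p+1) * Bq q p := by
  have h3 : 0 < b - a := by linarith
  rw [← intervalIntegral.integral_congr_Ioo_of_le hab.le (fun u hu => beta_pt hu),
    intervalIntegral.integral_const_mul]
  have := intervalIntegral.integral_comp_mul_sub (a := a) (b := b)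
    (fun x : ℝ => x^q * (1-x)^p) (inv_ne_zero h3.ne') ((b-a)⁻¹ * a)
  simp only [← mul_sub, inv_inv, sub_self, inv_mul_cancel₀ h3.ne', smul_eq_mul] at this
  rw [this, Real.rpow_add h3 (q+p) 1, Real.rpow_one, Bq]
  ring

noncomputable def ff (α lam v : ℝ) : ℝ := v^(α-1) * EE α (lam * v^α)

lemma ml_eq (α lam v : ℝ) : mittagLeffler α α (-lam * v^α) = EE α (lam * v^α) := by
  unfold mittagLeffler EE
  congr 1; ext k
  rw [div_eq_mul_inv, neg_mul, show (k:ℝ) * α + α = α * (k+1) by ring]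

section
variable {α lam : ℝ}

lemma ff_nonneg (h0 : 0 < α) (h1 : α < 1) (hl : 0 < lam) {v : ℝ} (hv : 0 < v) :
    0 ≤ ff α lam v := by
  have := EE_nonneg h0 h1 (x := lam * v^α) (by positivity)
  unfold ff; positivity

lemma ff_le (h0 : 0 < α) (h1 : α < 1) (hl : 0 < lam) {v : ℝ} (hv : 0 < v) :
    ff α lam v ≤ v^(α-1) * (Real.Gamma α)⁻¹ := by
  have := EE_le h0 h1 (x := lam * v^α) (by positivity)
  unfold ff; gcongr

lemma ff_deriv (h0 : 0 < α) (h1 : α < 1) (hl : 0 < lam) {v : ℝ} (hv : 0 < v) :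
    ∃ d, HasDerivAt (ff α lam) d v ∧ |d| ≤ v^(α-2) * (Real.Gamma α)⁻¹ := by
  have hx : 0 < lam * v^α := by positivity
  have e1 := Real.hasDerivAt_rpow_const (x := v) (p := α) (Or.inl hv.ne')
  have e2 := Real.hasDerivAt_rpow_const (x := v) (p := α - 1) (Or.inl hv.ne')
  have e3 : HasDerivAt (fun y => EE α (lam * y^α))
      (-DD α (lam * v^α) * (lam * (α * v^(α-1)))) v :=
    HasDerivAt.comp (h₂ := EE α) (h := fun y => lam * y^α) v (EE_deriv h0 h1 hx) (e1.const_mul lam)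
  refine ⟨_, e2.mul e3, ?_⟩
  rw [show α - 1 - 1 = α - 2 by ring]
  have e4 : v^(α-1) * v^(α-1) = v^(α-2) * v^α := by
    rw [← Real.rpow_add hv, ← Real.rpow_add hv]; ring_nf
  have e5 : (α - 1) * v^(α-2) * EE α (lam * v^α) + v^(α-1) * (-DD α (lam * v^α) * (lam * (α * v^(α-1))))
      = - (v^(α-2) * ((1-α) * EE α (lam * v^α) + α * ((lam * v^α) * DD α (lam * v^α)))) := by
    linear_combination (-DD α (lam * v^α) * lam * α) * e4
  rw [e5, abs_neg]
  have a1 := EE_nonneg h0 h1 hx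
  have a2 := EE_le h0 h1 hx
  have a3 := DD_nonneg h0 h1 hx
  have a4 := DD_le h0 h1 hx
  have h1' : 0 ≤ 1 - α := by linarith
  rw [abs_of_nonneg (by positivity)]
  gcongr
  nlinarith

lemma ff_diff (h0 : 0 < α) (h1 : α < 1) (hl : 0 < lam) {v r : ℝ} (hv : 0 < v) (hr : v < r) :
    |ff α lam v - ff α lam r| ≤ (Real.Gamma α)⁻¹ * (v^(α-3/2) * (r-v)^(1/2:ℝ)) := by
  have hG := Real.Gamma_pos_of_pos h0
  have hr0 := hv.trans hr
  have hrv : 0 < r - v := by linarith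
  have b1 : |ff α lam v - ff α lam r| ≤ v^(α-1) * (Real.Gamma α)⁻¹ := by
    have c1 := ff_nonneg h0 h1 hl hv
    have c2 := ff_nonneg h0 h1 hl hr0
    have c3 := ff_le h0 h1 hl hv
    have c4 := ff_le h0 h1 hl hr0
    have c5 : r^(α-1) * (Real.Gamma α)⁻¹ ≤ v^(α-1) * (Real.Gamma α)⁻¹ :=
      mul_le_mul_of_nonneg_right (Real.rpow_le_rpow_of_nonpos hv hr.le (by linarith)) (by positivity)
    rw [abs_le]; constructor <;> linarith
  have b2 : |ff α lam v - ff α lam r| ≤ v^(α-2) * (Real.Gamma α)⁻¹ * (r - v) := by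
    have hd : ∀ x ∈ Set.Icc v r, ∃ d, HasDerivAt (ff α lam) d x ∧ |d| ≤ x^(α-2) * (Real.Gamma α)⁻¹ :=
      fun x hx => ff_deriv h0 h1 hl (hv.trans_le hx.1)
    choose! d hd1 hd2 using hd
    have := (convex_Icc v r).norm_image_sub_le_of_norm_hasDerivWithin_le
      (C := v^(α-2) * (Real.Gamma α)⁻¹) (fun x hx => (hd1 x hx).hasDerivWithinAt)
      (fun x hx => (hd2 x hx).trans (mul_le_mul_of_nonneg_right
        (Real.rpow_le_rpow_of_nonpos hv hx.1 (by linarith)) (by positivity)))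
      (Set.right_mem_Icc.2 hr.le) (Set.left_mem_Icc.2 hr.le)
    rw [Real.norm_eq_abs, Real.norm_eq_abs, abs_sub_comm v r, abs_of_pos hrv] at this
    exact this
  apply abs_le_of_sq_le_sq _ (by positivity)
  rw [← sq_abs]
  calc |ff α lam v - ff α lam r|^2 = |ff α lam v - ff α lam r| * |ff α lam v - ff α lam r| := sq _
    _ ≤ (v^(α-1) * (Real.Gamma α)⁻¹) * (v^(α-2) * (Real.Gamma α)⁻¹ * (r - v)) :=
        mul_le_mul b1 b2 (abs_nonneg _) (by positivity)
    _ = ((Real.Gamma α)⁻¹)^2 * ((v^(α-1) * v^(α-2)) * (r-v)) := by ring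
    _ = _ := by
      rw [mul_pow, mul_pow, ← Real.rpow_natCast ((r-v)^(1/2:ℝ)), ← Real.rpow_mul hrv.le,
        ← Real.rpow_natCast (v^(α-3/2)), ← Real.rpow_mul hv.le, ← Real.rpow_add hv]
      congr 2
      · congr 1; push_cast; ring
      · norm_num

end

/-- bound for the inner integral -/
lemma inner_bound {α H lam t τ : ℝ} (hH0 : 0 < H) (hH1 : H < 1/2)
    (hα0 : 1/2 < α) (hα1 : α < 1) (hl : 0 < lam) (h0 : 0 < τ) (ht : τ < t) :
    |∫ u in τ..t, (ff α lam (t-u) - ff α lam (t-τ)) * dKH H u τ|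
      ≤ (|cH H| * (Real.Gamma α)⁻¹ * Bq (H-1) (α-3/2)) * (t-τ)^(α+H-3/2) := by
  have hG := Real.Gamma_pos_of_pos (show 0 < α by linarith)
  have key := intervalIntegral.norm_integral_le_of_norm_le ht.le
    (f := fun u => (ff α lam (t-u) - ff α lam (t-τ)) * dKH H u τ)
    (g := fun u => (|cH H| * (Real.Gamma α)⁻¹) * ((u-τ)^(H-1) * (t-u)^(α-3/2)))
    (μ := MeasureTheory.volume)
    (by
      filter_upwards [MeasureTheory.volume.ae_ne t] with u hut hu
      have hu1 : 0 < u - τ := by linarith [hu.1]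
      have hu2 : 0 < t - u := by linarith [lt_of_le_of_ne hu.2 hut]
      have d := ff_diff (by linarith) hα1 hl hu2 (show t - u < t - τ by linarith)
      rw [show t - τ - (t - u) = u - τ by ring] at d
      have hw : (u/τ)^(H-1/2) ≤ 1 :=
        Real.rpow_le_one_of_one_le_of_nonpos ((one_le_div h0).2 (by linarith)) (by linarith)
      have hw0 : 0 ≤ (u/τ)^(H-1/2) := by
        have : 0 < u := by linarith
        positivity
      rw [norm_mul, Real.norm_eq_abs, Real.norm_eq_abs]
      have hk : |dKH H u τ| ≤ |cH H| * (u-τ)^(H-3/2) := by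
        unfold dKH
        rw [abs_mul, abs_mul, abs_of_nonneg hw0, abs_of_pos (Real.rpow_pos_of_pos hu1 _)]
        gcongr
        exact mul_le_of_le_one_right (abs_nonneg _) hw
      calc _ ≤ ((Real.Gamma α)⁻¹ * ((t-u)^(α-3/2) * (u-τ)^(1/2:ℝ))) * (|cH H| * (u-τ)^(H-3/2)) :=
            mul_le_mul d hk (abs_nonneg _) (by positivity)
        _ = (|cH H| * (Real.Gamma α)⁻¹) * (((u-τ)^(1/2:ℝ) * (u-τ)^(H-3/2)) * (t-u)^(α-3/2)) := by
            ring
        _ = _ := by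
          rw [← Real.rpow_add hu1]; ring_nf)
    ((beta_int' (by linarith) (by linarith) ht).const_mul _)
  rw [intervalIntegral.integral_const_mul, beta_eq' _ _ ht] at key
  refine key.trans (le_of_eq ?_)
  rw [show H - 1 + (α - 3/2) + 1 = α + H - 3/2 by ring]; ring

lemma KH_bound {H t τ : ℝ} (hH0 : 0 < H) (hH1 : H < 1/2) (h0 : 0 < τ) (ht : τ < t) :
    |KH H t τ| ≤ |cH H| * ((t-τ)^(H-1/2) + Bq (H/2-1) 0 * (τ^((H-1)/2) * (t-τ)^(H/2))) := by
  have hr : 0 < t - τ := by linarith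
  have key := intervalIntegral.norm_integral_le_of_norm_le ht.le
    (f := fun u => u^(H-3/2) * (u-τ)^(H-1/2))
    (g := fun u => τ^(3*H/2-1) * ((u-τ)^(H/2-1) * (t-u)^(0:ℝ)))
    (μ := MeasureTheory.volume)
    (by
      refine Filter.Eventually.of_forall fun u hu => ?_
      have hu1 : 0 < u - τ := by linarith [hu.1]
      have hu0 : 0 < u := by linarith
      rw [Real.norm_of_nonneg (by positivity), Real.rpow_zero, mul_one]
      calc u^(H-3/2) * (u-τ)^(H-1/2)
          = (u^(3*H/2-1) * u^(-(1/2+H/2))) * (u-τ)^(H-1/2) := by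
            rw [← Real.rpow_add hu0]; ring_nf
        _ ≤ (τ^(3*H/2-1) * (u-τ)^(-(1/2+H/2))) * (u-τ)^(H-1/2) := by
            gcongr ?_ * ?_ * _
            · exact Real.rpow_le_rpow_of_nonpos h0 hu.1.le (by linarith)
            · exact Real.rpow_le_rpow_of_nonpos hu1 (by linarith) (by linarith)
        _ = _ := by
            rw [mul_assoc, ← Real.rpow_add hu1]; ring_nf)
    ((beta_int' (by linarith) (by linarith) ht).const_mul _)
  rw [intervalIntegral.integral_const_mul, beta_eq' _ _ ht, Real.norm_eq_abs] at key
  have hw : (t/τ)^(H-1/2) ≤ 1 :=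
    Real.rpow_le_one_of_one_le_of_nonpos ((one_le_div h0).2 (by linarith)) (by linarith)
  have hw0 : 0 ≤ (t/τ)^(H-1/2) := by
    have : 0 < t := by linarith
    positivity
  unfold KH
  rw [abs_mul]
  refine mul_le_mul_of_nonneg_left ?_ (abs_nonneg _)
  refine (abs_sub _ _).trans ?_
  apply add_le_add
  · rw [abs_of_nonneg (by positivity)]
    exact mul_le_of_le_one_left (by positivity) hw
  · rw [abs_mul, abs_mul, abs_of_nonneg (show 0 ≤ τ^(1/2-H) by positivity)]
    have h3 : |H - 1/2| ≤ 1 := by rw [abs_le]; constructor <;> linarith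
    calc _ ≤ 1 * τ^(1/2-H) * (τ^(3*H/2-1) * ((t-τ)^(H/2-1+0+1) * Bq (H/2-1) 0)) := by
          gcongr
      _ = Bq (H/2-1) 0 * ((τ^(1/2-H) * τ^(3*H/2-1)) * (t-τ)^(H/2-1+0+1)) := by ring
      _ = _ := by
          rw [← Real.rpow_add h0]; ring_nf

lemma point_bound {α H : ℝ} (hH0 : 0 < H) (hH1 : H < 1/2)
    (hα0 : 1/2 < α) (hα1 : α < 1) :
    ∃ K1 K2 : ℝ, ∀ lam t τ : ℝ, 0 < lam → 0 < τ → τ < t →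
      (KH H t τ * ff α lam (t-τ) + ∫ u in τ..t, (ff α lam (t-u) - ff α lam (t-τ)) * dKH H u τ)^2
      ≤ K1 * ((τ-0)^(0:ℝ) * (t-τ)^(2*α+2*H-3)) + K2 * ((τ-0)^(H-1) * (t-τ)^(H+2*α-2)) := by
  have hG := Real.Gamma_pos_of_pos (show 0 < α by linarith)
  set g := (Real.Gamma α)⁻¹ with hg
  have hg0 : 0 < g := by positivity
  set c := |cH H| with hc
  have hc0 : 0 ≤ c := abs_nonneg _
  set k1 := c * g + c * g * Bq (H-1) (α-3/2) with hk1
  set k2 := c * g * Bq (H/2-1) 0 with hk2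
  refine ⟨2 * k1^2, 2 * k2^2, ?_⟩
  intro lam t τ hl h0 ht
  have hr : 0 < t - τ := by linarith
  have i1 := inner_bound hH0 hH1 hα0 hα1 hl h0 ht
  have i2 := KH_bound hH0 hH1 h0 ht
  have i3 := ff_nonneg (α := α) (by linarith) hα1 hl hr
  have i4 := ff_le (α := α) (by linarith) hα1 hl hr
  rw [← hg] at i1 i4
  rw [← hc] at i1 i2
  set r := t - τ with hrdef
  set I := ∫ u in τ..t, (ff α lam (t-u) - ff α lam r) * dKH H u τ
  have hB := Bq_nonneg (H/2-1) 0
  have i5 : |KH H t τ * ff α lam r| ≤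
      (c * (r^(H-1/2) + Bq (H/2-1) 0 * (τ^((H-1)/2) * r^(H/2)))) * (r^(α-1) * g) := by
    rw [abs_mul, abs_of_nonneg i3]
    exact mul_le_mul i2 i4 i3 (by positivity)
  have p1 : r^(H-1/2) * r^(α-1) = r^(α+H-3/2) := by
    rw [← Real.rpow_add hr]; ring_nf
  have p2 : r^(H/2) * r^(α-1) = r^(H/2+α-1) := by
    rw [← Real.rpow_add hr]; ring_nf
  set A := r^(α+H-3/2) with hA
  set B := τ^((H-1)/2) * r^(H/2+α-1) with hBdef
  have i6 : |KH H t τ * ff α lam r + I| ≤ k1 * A + k2 * B := by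
    refine (abs_add_le _ _).trans ((add_le_add i5 i1).trans (le_of_eq ?_))
    rw [hk1, hk2, hBdef, ← p2, ← p1]
    ring
  have qA : A^2 = r^(2*α+2*H-3) := by
    rw [hA, ← Real.rpow_natCast, ← Real.rpow_mul hr.le]; congr 1; push_cast; ring
  have qB : B^2 = τ^(H-1) * r^(H+2*α-2) := by
    rw [hBdef, mul_pow, ← Real.rpow_natCast, ← Real.rpow_mul h0.le, ← Real.rpow_natCast,
      ← Real.rpow_mul hr.le]
    congr 2 <;> (push_cast; ring)
  rw [sub_zero, Real.rpow_zero, one_mul, ← qA, ← qB]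
  calc _ ≤ (k1 * A + k2 * B)^2 := sq_le_sq' (by linarith [neg_abs_le (KH H t τ * ff α lam r + I)])
            ((le_abs_self _).trans i6)
    _ ≤ _ := by nlinarith [sq_nonneg (k1 * A - k2 * B)]

theorem KHstar_phi_L2_bound (α H : ℝ) (hH0 : 0 < H) (hH1 : H < 1/2)
    (hα0 : 1/2 < α) (hα1 : α < 1) (hαH : 1 < α + H) :
    ∃ C : ℝ, 0 < C ∧ ∀ lam t : ℝ, 0 < lam → 0 < t →
      (∫ τ in (0:ℝ)..t,
          (KH H t τ * ((t - τ) ^ (α - 1) * mittagLeffler α α (-lam * (t - τ) ^ α))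
            + ∫ u in τ..t,
              ((t - u) ^ (α - 1) * mittagLeffler α α (-lam * (t - u) ^ α)
                - (t - τ) ^ (α - 1) * mittagLeffler α α (-lam * (t - τ) ^ α))
              * dKH H u τ) ^ 2)
        ≤ C * t ^ (2*α + 2*H - 2) := by
  obtain ⟨K1, K2, hK⟩ := point_bound hH0 hH1 hα0 hα1
  set b1 := Bq 0 (2*α+2*H-3)
  set b2 := Bq (H-1) (H+2*α-2)
  refine ⟨|K1| * b1 + |K2| * b2 + 1, ?_, ?_⟩
  · have := Bq_nonneg 0 (2*α+2*H-3)
    have := Bq_nonneg (H-1) (H+2*α-2)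
    positivity
  intro lam t hl ht
  simp only [ml_eq]
  have j1 : IntervalIntegrable (fun τ : ℝ => K1 * ((τ-0)^(0:ℝ) * (t-τ)^(2*α+2*H-3)))
      MeasureTheory.volume 0 t := (beta_int' (by linarith) (by linarith) ht).const_mul K1
  have j2 : IntervalIntegrable (fun τ : ℝ => K2 * ((τ-0)^(H-1) * (t-τ)^(H+2*α-2)))
      MeasureTheory.volume 0 t := (beta_int' (by linarith) (by linarith) ht).const_mul K2
  have key := intervalIntegral.norm_integral_le_of_norm_le ht.le (μ := MeasureTheory.volume)
    (f := fun τ => (KH H t τ * ff α lam (t-τ)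
      + ∫ u in τ..t, (ff α lam (t-u) - ff α lam (t-τ)) * dKH H u τ)^2)
    (g := fun τ => K1 * ((τ-0)^(0:ℝ) * (t-τ)^(2*α+2*H-3)) + K2 * ((τ-0)^(H-1) * (t-τ)^(H+2*α-2)))
    (by
      filter_upwards [MeasureTheory.volume.ae_ne t] with τ hτ hu
      rw [Real.norm_of_nonneg (sq_nonneg _)]
      exact hK lam t τ hl hu.1 (lt_of_le_of_ne hu.2 hτ))
    (j1.add j2)
  rw [intervalIntegral.integral_add j1 j2, intervalIntegral.integral_const_mul,
    intervalIntegral.integral_const_mul, beta_eq' _ _ ht, beta_eq' _ _ ht, sub_zero,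
    show 0 + (2*α+2*H-3) + 1 = 2*α+2*H-2 by ring,
    show H - 1 + (H+2*α-2) + 1 = 2*α+2*H-2 by ring] at key
  refine ((Real.le_norm_self _).trans key).trans ?_
  have hT : 0 < t^(2*α+2*H-2) := by positivity
  have hb1 : 0 ≤ b1 := Bq_nonneg _ _
  have hb2 : 0 ≤ b2 := Bq_nonneg _ _
  have m1 := mul_le_mul_of_nonneg_right (le_abs_self K1) (mul_nonneg hT.le hb1)
  have m2 := mul_le_mul_of_nonneg_right (le_abs_self K2) (mul_nonneg hT.le hb2)
  calc _ ≤ |K1| * (t^(2*α+2*H-2) * b1) + |K2| * (t^(2*α+2*H-2) * b2) := add_le_add m1 m2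
    _ ≤ _ := by nlinarith
end

section
/- Let α > 0 and 1/2 < H < 1 with α + H > 1. Then the series ∑_{n=0}^∞ binom(2H-2, n) (-1)^n/(α+n) converges to a finite value S (where binom(x,n) denotes the generalized binomial coefficient x(x-1)⋯(x-n+1)/n!), and for every t > 0, ∫_0^t ∫_0^t p^{α-1} q^{α-1} |p-q|^{2H-2} dp dq = (2S/(2α+2H-2)) · t^{2α+2H-2}. -/
open Real intervalIntegral

/-- The generalized binomial coefficient `x(x-1)⋯(x-n+1)/n!` for real `x`. -/
noncomputable def genBinom (x : ℝ) (n : ℕ) : ℝ :=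
  (∏ i ∈ Finset.range n, (x - i)) / (n.factorial : ℝ)

open MeasureTheory Set in
theorem aux_beta_integrable (α c : ℝ) (hα : 0 < α) (hc : -1 < c) :
    IntervalIntegrable (fun x : ℝ => x ^ (α - 1) * (1 - x) ^ c) volume 0 1 := by
  have h := Complex.betaIntegral_convergent (u := (α : ℂ)) (v := ((c + 1 : ℝ) : ℂ))
    (by simpa using hα) (by simp only [Complex.ofReal_re]; linarith)
  rw [intervalIntegrable_iff_integrableOn_Ioc_of_le zero_le_one] at h ⊢
  have h2 := h.re
  refine IntegrableOn.congr_fun h2 (fun x hx => ?_) measurableSet_Ioc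
  have e1 : ((α : ℂ) - 1) = ((α - 1 : ℝ) : ℂ) := by push_cast; ring
  have e2 : (((c + 1 : ℝ) : ℂ) - 1) = ((c : ℝ) : ℂ) := by push_cast; ring
  have e3 : (1 - (x : ℂ)) = ((1 - x : ℝ) : ℂ) := by push_cast; ring
  simp only [RCLike.re_to_complex]
  rw [e1, e2, e3, ← Complex.ofReal_cpow hx.1.le, ← Complex.ofReal_cpow (by linarith [hx.2]),
    ← Complex.ofReal_mul, Complex.ofReal_re]

theorem aux_genBinom (c : ℝ) (n : ℕ) : genBinom c n = Ring.choose c n := by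
  have h : (descPochhammer ℤ n).smeval c = (descPochhammer ℝ n).eval c := by
    rw [← descPochhammer_map (algebraMap ℤ ℝ), Polynomial.eval_map_algebraMap,
      Polynomial.aeval_eq_smeval]
  rw [Ring.choose_eq_smul, h,
    descPochhammer_eval_eq_prod_range, genBinom, smul_eq_mul, div_eq_inv_mul]

theorem aux_binom_series (c x : ℝ) (hx0 : 0 ≤ x) (hx1 : x < 1) :
    HasSum (fun n : ℕ => genBinom c n * (-1 : ℝ) ^ n * x ^ n) ((1 - x) ^ c) := by
  have h := (Real.one_add_rpow_hasFPowerSeriesOnBall_zero (a := c)).hasSum (y := -x) (by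
    simp [enorm_eq_nnnorm, ← NNReal.coe_lt_one, abs_of_nonneg hx0, hx1])
  have e : (1 : ℝ) - x = 1 + (0 + -x) := by ring
  rw [e]
  convert! h using 2 with n
  rw [binomialSeries_apply, aux_genBinom]
  simp only [List.ofFn_const, List.prod_replicate, smul_eq_mul]
  rw [neg_pow x n]; ring

theorem aux_coeff_nonneg (c : ℝ) (hc : c < 0) (n : ℕ) : 0 ≤ genBinom c n * (-1 : ℝ) ^ n := by
  have : genBinom c n * (-1 : ℝ) ^ n = (∏ i ∈ Finset.range n, ((i : ℝ) - c)) / (n.factorial : ℝ) := by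
    have h2 : ∏ i ∈ Finset.range n, ((i : ℝ) - c)
        = (∏ i ∈ Finset.range n, (c - i)) * (-1 : ℝ) ^ n := by
      rw [← Finset.card_range n, ← Finset.prod_const, Finset.card_range, ← Finset.prod_mul_distrib]
      exact Finset.prod_congr rfl fun i _ => by ring
    rw [h2, genBinom]; ring
  rw [this]
  exact div_nonneg (Finset.prod_nonneg fun i _ => by
    have : (0 : ℝ) ≤ i := Nat.cast_nonneg i
    linarith) (Nat.cast_nonneg _)

open MeasureTheory Set in
theorem aux_series (α c : ℝ) (hα : 0 < α) (hc : -1 < c) (hc0 : c < 0) :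
    HasSum (fun n : ℕ => genBinom c n * (-1 : ℝ) ^ n / (α + n))
      (∫ x in (0:ℝ)..1, x ^ (α - 1) * (1 - x) ^ c) := by
  have hB := aux_beta_integrable α c hα hc
  set a : ℕ → ℝ := fun n => genBinom c n * (-1 : ℝ) ^ n with ha
  have ha0 : ∀ n, 0 ≤ a n := aux_coeff_nonneg c hc0
  set F : ℕ → ℝ → ℝ := fun n x => a n * x ^ (α - 1 + n) with hF
  have hn : ∀ n : ℕ, -1 < α - 1 + n := fun n => by
    have : (0 : ℝ) ≤ n := Nat.cast_nonneg n
    linarith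
  rw [intervalIntegrable_iff_integrableOn_Ioo_of_le zero_le_one] at hB
  have hFint : ∀ n, Integrable (F n) (volume.restrict (Ioo 0 1)) := fun n => by
    have := (intervalIntegral.intervalIntegrable_rpow' (a := 0) (b := 1) (hn n)).const_mul (a n)
    rwa [intervalIntegrable_iff_integrableOn_Ioo_of_le zero_le_one] at this
  have hFval : ∀ n, ∫ x in Ioo (0:ℝ) 1, F n x = a n / (α + n) := fun n => by
    rw [← integral_Ioc_eq_integral_Ioo, ← intervalIntegral.integral_of_le zero_le_one]
    simp only [hF]
    rw [intervalIntegral.integral_const_mul, integral_rpow (Or.inl (hn n))]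
    have : α - 1 + n + 1 = α + n := by ring
    have h0 : α + n ≠ 0 := by linarith [hn n]
    rw [this, Real.one_rpow, Real.zero_rpow h0]; ring
  have hFnn : ∀ n, ∀ x ∈ Ioo (0:ℝ) 1, 0 ≤ F n x := fun n x hx =>
    mul_nonneg (ha0 n) (Real.rpow_nonneg hx.1.le _)
  have hFnorm : ∀ n, ∫ x in Ioo (0:ℝ) 1, ‖F n x‖ = a n / (α + n) := fun n => by
    rw [← hFval]
    exact setIntegral_congr_fun measurableSet_Ioo fun x hx => Real.norm_of_nonneg (hFnn n x hx)
  have hFs : ∀ x ∈ Ioo (0:ℝ) 1, HasSum (fun n => F n x) (x ^ (α - 1) * (1 - x) ^ c) := fun x hx => by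
    have := (aux_binom_series c x hx.1.le hx.2).mul_left (x ^ (α - 1))
    convert! this using 2 with n
    simp only [hF, ha]
    rw [Real.rpow_add hx.1, Real.rpow_natCast]; ring
  have hsum : Summable (fun n => a n / (α + n)) := by
    refine summable_of_sum_le (c := ∫ x in Ioo (0:ℝ) 1, x ^ (α - 1) * (1 - x) ^ c)
      (fun n => div_nonneg (ha0 n) (by linarith [hn n])) (fun u => ?_)
    simp only [← hFval]
    rw [← integral_finsetSum _ (fun n _ => hFint n)]
    refine setIntegral_mono_on (integrable_finsetSum _ fun n _ => hFint n) hB measurableSet_Ioo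
      fun x hx => ?_
    exact sum_le_hasSum u (fun n _ => hFnn n x hx) (hFs x hx)
  have key := hasSum_integral_of_summable_integral_norm (μ := volume.restrict (Ioo (0:ℝ) 1)) hFint
    (by simpa only [hFnorm] using hsum)
  simp only [hFval] at key
  rw [intervalIntegral.integral_of_le zero_le_one, integral_Ioc_eq_integral_Ioo]
  convert! key using 1
  exact setIntegral_congr_fun measurableSet_Ioo fun x hx => (hFs x hx).tsum_eq.symm

open MeasureTheory Set in
theorem aux_scaled_integrable (α c q : ℝ) (hα : 0 < α) (hc : -1 < c) (hq : 0 < q) :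
    IntervalIntegrable (fun p : ℝ => p ^ (α - 1) * (q - p) ^ c) volume 0 q := by
  have h := (aux_beta_integrable α c hα hc).comp_mul_left (c := q⁻¹)
  simp only [zero_div, one_div, inv_inv] at h
  have h2 := h.const_mul (q ^ (α - 1 + c))
  rw [intervalIntegrable_iff_integrableOn_Ioc_of_le hq.le] at h2 ⊢
  refine h2.congr_fun (fun p hp => ?_) measurableSet_Ioc
  have e : q - p = q * (1 - q⁻¹ * p) := by field_simp
  have e2 : 0 ≤ 1 - q⁻¹ * p := by
    rw [sub_nonneg, inv_mul_le_iff₀ hq]; linarith [hp.2]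
  simp only
  rw [e, Real.mul_rpow hq.le e2, Real.mul_rpow (inv_nonneg.2 hq.le) hp.1.le, Real.inv_rpow hq.le,
    Real.rpow_add hq]
  have := (Real.rpow_pos_of_pos hq (α - 1)).ne'
  field_simp

open MeasureTheory Set in
theorem aux_scaled_integral (α c q : ℝ) (hq : 0 < q) :
    (∫ p in (0:ℝ)..q, p ^ (α - 1) * (q - p) ^ c)
      = q ^ (α + c) * ∫ x in (0:ℝ)..1, x ^ (α - 1) * (1 - x) ^ c := by
  have h := intervalIntegral.integral_comp_mul_left (a := 0) (b := 1)
    (fun p : ℝ => p ^ (α - 1) * (q - p) ^ c) hq.ne'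
  simp only [mul_zero, mul_one, smul_eq_mul] at h
  have h3 : (∫ x in (0:ℝ)..1, (q * x) ^ (α - 1) * (q - q * x) ^ c)
      = q ^ (α - 1 + c) * ∫ x in (0:ℝ)..1, x ^ (α - 1) * (1 - x) ^ c := by
    rw [← intervalIntegral.integral_const_mul]
    refine intervalIntegral.integral_congr fun x hx => ?_
    rw [uIcc_of_le zero_le_one] at hx
    have e : q - q * x = q * (1 - x) := by ring
    rw [e, Real.mul_rpow hq.le hx.1, Real.mul_rpow hq.le (by linarith [hx.2]), Real.rpow_add hq]
    ring
  rw [h3] at h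
  have e : α + c = 1 + (α - 1 + c) := by ring
  rw [e, Real.rpow_add hq, Real.rpow_one, mul_assoc, h]
  field_simp

open MeasureTheory Set in
theorem aux_double (α c t : ℝ) (hα : 0 < α) (hc : -1 < c) (hc0 : c < 0) (hαc : 0 < 2 * α + c)
    (ht : 0 < t) :
    (∫ q in (0:ℝ)..t, ∫ p in (0:ℝ)..t, p ^ (α - 1) * q ^ (α - 1) * |p - q| ^ c)
      = 2 * ((∫ x in (0:ℝ)..1, x ^ (α - 1) * (1 - x) ^ c) * (t ^ (2 * α + c) / (2 * α + c))) := by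
  set B := ∫ x in (0:ℝ)..1, x ^ (α - 1) * (1 - x) ^ c with hB
  set μ := volume.restrict (Ioc (0:ℝ) t) with hμ
  set K : ℝ × ℝ → ℝ := fun z =>
    {z : ℝ × ℝ | z.2 ≤ z.1}.indicator
      (fun z => z.2 ^ (α - 1) * z.1 ^ (α - 1) * |z.2 - z.1| ^ c) z with hK
  have hms : MeasurableSet {z : ℝ × ℝ | z.2 ≤ z.1} := measurableSet_le measurable_snd measurable_fst
  have hKm : Measurable K := by
    refine Measurable.indicator ?_ hms
    fun_prop
  have hsec : ∀ q : ℝ, (fun p => K (q, p)) = (Iic q).indicator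
      (fun p => p ^ (α - 1) * q ^ (α - 1) * |p - q| ^ c) := by
    intro q; ext p; simp [hK, indicator]
  have hset : ∀ q ∈ Ioc (0:ℝ) t, Iic q ∩ Ioc 0 t = Ioc 0 q := by
    intro q hq; ext p; simp only [mem_inter_iff, mem_Iic, mem_Ioc]
    constructor
    · rintro ⟨h1, h2, h3⟩; exact ⟨h2, h1⟩
    · rintro ⟨h1, h2⟩; exact ⟨h2, h1, h2.trans hq.2⟩
  have hcongr : ∀ q : ℝ, ∀ p ∈ Ioc (0:ℝ) q, q ^ (α - 1) * (p ^ (α - 1) * (q - p) ^ c) =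
      p ^ (α - 1) * q ^ (α - 1) * |p - q| ^ c := by
    intro q p hp
    rw [abs_sub_comm, abs_of_nonneg (by linarith [hp.2] : 0 ≤ q - p)]; ring
  have hsecint : ∀ q ∈ Ioc (0:ℝ) t, Integrable (fun p => K (q, p)) μ := by
    intro q hq
    rw [hsec, integrable_indicator_iff measurableSet_Iic, IntegrableOn, hμ,
      Measure.restrict_restrict measurableSet_Iic, hset q hq]
    have := (aux_scaled_integrable α c q hα hc hq.1).const_mul (q ^ (α - 1))
    rw [intervalIntegrable_iff_integrableOn_Ioc_of_le hq.1.le] at this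
    exact this.congr_fun (hcongr q) measurableSet_Ioc
  have hsecval : ∀ q ∈ Ioc (0:ℝ) t, ∫ p, K (q, p) ∂μ = B * q ^ (2 * α + c - 1) := by
    intro q hq
    rw [hsec, MeasureTheory.integral_indicator measurableSet_Iic, hμ,
      Measure.restrict_restrict measurableSet_Iic, hset q hq,
      ← setIntegral_congr_fun measurableSet_Ioc (hcongr q),
      ← intervalIntegral.integral_of_le hq.1.le, intervalIntegral.integral_const_mul,
      aux_scaled_integral α c q hq.1, ← hB, ← mul_assoc, ← Real.rpow_add hq.1, mul_comm]
    congr 2; ring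
  have hKnn : ∀ q ∈ Ioc (0:ℝ) t, ∀ p ∈ Ioc (0:ℝ) t, 0 ≤ K (q, p) := by
    intro q hq p hp
    refine indicator_apply_nonneg fun _ => ?_
    exact mul_nonneg (mul_nonneg (Real.rpow_nonneg hp.1.le _) (Real.rpow_nonneg hq.1.le _))
      (Real.rpow_nonneg (abs_nonneg _) _)
  have hpow : Integrable (fun q : ℝ => B * q ^ (2 * α + c - 1)) μ := by
    have := (intervalIntegral.intervalIntegrable_rpow' (a := 0) (b := t)
      (by linarith : -1 < 2 * α + c - 1)).const_mul B
    rwa [intervalIntegrable_iff_integrableOn_Ioc_of_le ht.le] at this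
  have hKint : Integrable K (μ.prod μ) := by
    rw [integrable_prod_iff hKm.aestronglyMeasurable]
    refine ⟨ae_restrict_of_forall_mem measurableSet_Ioc hsecint, ?_⟩
    refine IntegrableOn.congr_fun hpow (fun q hq => ?_) measurableSet_Ioc
    rw [← hsecval q hq]
    exact setIntegral_congr_fun measurableSet_Ioc
      fun p hp => (Real.norm_of_nonneg (hKnn q hq p hp)).symm
  have hKval : ∫ z, K z ∂(μ.prod μ) = B * (t ^ (2 * α + c) / (2 * α + c)) := by
    rw [integral_prod _ hKint]
    rw [setIntegral_congr_fun measurableSet_Ioc hsecval,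
      ← intervalIntegral.integral_of_le ht.le, intervalIntegral.integral_const_mul,
      integral_rpow (Or.inl (by linarith))]
    rw [sub_add_cancel, Real.zero_rpow hαc.ne', sub_zero]
  have hsplit : ∀ q p : ℝ, p ^ (α - 1) * q ^ (α - 1) * |p - q| ^ c
      = (K + K ∘ Prod.swap) (q, p) := by
    intro q p
    simp only [hK, Pi.add_apply, Function.comp_apply, Prod.swap_prod_mk, indicator, mem_ofPred_eq]
    rcases lt_trichotomy p q with h | h | h
    · rw [if_pos h.le, if_neg (not_le.2 h), add_zero]
    · subst h; simp [Real.zero_rpow hc0.ne]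
    · rw [if_pos h.le, if_neg (not_le.2 h), zero_add, abs_sub_comm]; ring
  simp only [intervalIntegral.integral_of_le ht.le, ← hμ, hsplit]
  rw [← integral_prod _ (hKint.add hKint.swap)]
  have : ∫ z, (K + K ∘ Prod.swap) z ∂(μ.prod μ)
      = ∫ z, K z ∂(μ.prod μ) + ∫ z, K z.swap ∂(μ.prod μ) := integral_add hKint hKint.swap
  rw [this, integral_prod_swap, hKval]; ring

theorem double_integral_eval (α H : ℝ) (hα : 0 < α) (hH0 : 1/2 < H) (hH1 : H < 1)
    (hαH : 1 < α + H) :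
    ∃ S : ℝ, HasSum (fun n : ℕ => genBinom (2*H - 2) n * (-1 : ℝ) ^ n / (α + n)) S ∧
      ∀ t : ℝ, 0 < t →
        (∫ q in (0:ℝ)..t, ∫ p in (0:ℝ)..t, p ^ (α - 1) * q ^ (α - 1) * |p - q| ^ (2*H - 2))
          = (2 * S / (2*α + 2*H - 2)) * t ^ (2*α + 2*H - 2) := by
  refine ⟨_, aux_series α (2*H - 2) hα (by linarith) (by linarith), fun t ht => ?_⟩
  rw [aux_double α (2*H - 2) t hα (by linarith) (by linarith) (by linarith) ht, ← add_sub_assoc]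
  ring
end

section
/- Let 0 < α ≤ 1 and 1/2 < H < 1 with α + H > 1. There exists a constant C > 0 (depending only on α and H) such that for every λ > 0 and every t > 0, ∫_0^t ∫_0^t (t-p)^{α-1} E_{α,α}(-λ (t-p)^α) (t-q)^{α-1} E_{α,α}(-λ (t-q)^α) |p-q|^{2H-2} dp dq ≤ C t^{2α+2H-2}. -/
open Real intervalIntegral

open MeasureTheory Set Filter Topology

lemma aux_Gamma_lower (R x : ℝ) (hR : 0 < R) (hx : 1 ≤ x) :
    R ^ (x - 1) * Real.exp (-R) ≤ Real.Gamma x := by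
  rw [Real.Gamma_eq_integral (by linarith)]
  have hint := Real.GammaIntegral_convergent (s := x) (by linarith)
  have h1 : ∫ s in Ioi R, R ^ (x - 1) * Real.exp (-s) ≤ ∫ s in Ioi R, Real.exp (-s) * s ^ (x - 1) := by
    apply setIntegral_mono_on
    · exact (integrableOn_exp_neg_Ioi R).const_mul _
    · exact hint.mono_set (Ioi_subset_Ioi hR.le)
    · exact measurableSet_Ioi
    · intro s hs
      rw [mul_comm]
      have : R ^ (x-1) ≤ s ^ (x-1) := Real.rpow_le_rpow hR.le (le_of_lt hs) (by linarith)
      gcongr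
  rw [MeasureTheory.integral_const_mul, integral_exp_neg_Ioi] at h1
  refine h1.trans ?_
  apply setIntegral_mono_set hint
  · filter_upwards [ae_restrict_mem measurableSet_Ioi] with s hs
    have : (0:ℝ) < s := hs
    simp only [Pi.zero_apply]
    positivity
  · exact (Ioi_subset_Ioi hR.le).eventuallyLE

lemma aux_summable (α : ℝ) (hα : 0 < α) (x : ℝ) :
    Summable (fun k : ℕ => x ^ k / Real.Gamma ((k : ℝ) * α + α)) := by
  set R : ℝ := (2 * (|x| + 1)) ^ (1 / α) with hRdef
  have hR : 0 < R := by positivity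
  have hRα : R ^ α = 2 * (|x| + 1) := by
    rw [hRdef, ← Real.rpow_mul (by positivity), one_div_mul_cancel hα.ne', Real.rpow_one]
  have hg : Summable (fun k : ℕ => (1/2 : ℝ) ^ k * (Real.exp R * R ^ (1 - α))) :=
    (summable_geometric_of_lt_one (by norm_num) (by norm_num)).mul_right _
  apply Summable.of_norm_bounded_eventually_nat hg
  have hev : ∀ᶠ k : ℕ in atTop, 1 / α ≤ (k : ℝ) :=
    tendsto_natCast_atTop_atTop.eventually_ge_atTop _
  filter_upwards [hev] with k hk
  have hk1 : 1 ≤ (k:ℝ) * α + α := by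
    rw [div_le_iff₀ hα] at hk; linarith
  have hG := aux_Gamma_lower R _ hR hk1
  have hGp : 0 < Real.Gamma ((k:ℝ) * α + α) := Real.Gamma_pos_of_pos (by linarith)
  rw [norm_div, norm_pow, Real.norm_eq_abs, Real.norm_eq_abs, abs_of_pos hGp, div_le_iff₀ hGp]
  have hpow : R ^ ((k:ℝ) * α + α - 1) = (2 * (|x| + 1)) ^ k * R ^ (α - 1) := by
    rw [← hRα, ← Real.rpow_natCast, ← Real.rpow_mul hR.le, ← Real.rpow_add hR]; congr 1; ring
  have hone : R ^ (1 - α) * R ^ (α - 1) = 1 := by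
    rw [← Real.rpow_add hR]; simp
  have he : Real.exp R * Real.exp (-R) = 1 := by rw [← Real.exp_add]; simp
  calc |x| ^ k ≤ (|x| + 1) ^ k := by gcongr; linarith
    _ = (1/2 : ℝ) ^ k * (Real.exp R * R ^ (1 - α)) * ((2 * (|x| + 1)) ^ k * R ^ (α - 1) * Real.exp (-R)) := by
        calc (|x| + 1) ^ k = ((1/2) * (2 * (|x| + 1))) ^ k * (Real.exp R * Real.exp (-R)) * (R ^ (1 - α) * R ^ (α - 1)) := by
              rw [he, hone]; ring
          _ = _ := by rw [mul_pow]; ring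
    _ ≤ _ := by
        rw [← hpow]; gcongr

lemma aux_continuous (α : ℝ) (hα : 0 < α) : Continuous (mittagLeffler α α) := by
  rw [continuous_iff_continuousAt]
  intro x
  have h : ContinuousOn (mittagLeffler α α) (Icc (-(|x|+1)) (|x|+1)) := by
    unfold mittagLeffler
    refine continuousOn_tsum (u := fun k : ℕ => (|x|+1) ^ k / Real.Gamma ((k : ℝ) * α + α)) ?_
      (aux_summable α hα _) ?_
    · intro i; fun_prop
    · intro k y hy
      have hGp : 0 < Real.Gamma ((k:ℝ) * α + α) := Real.Gamma_pos_of_pos (by positivity)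
      rw [norm_div, norm_pow, Real.norm_eq_abs, Real.norm_eq_abs, abs_of_pos hGp]
      have := abs_le.2 hy
      gcongr
  apply h.continuousAt
  apply Icc_mem_nhds
  · have := neg_abs_le x; linarith
  · have := le_abs_self x; linarith

lemma aux_beta (a b t : ℝ) (ha : 0 < a) (hb : 0 < b) (ht : 0 < t) :
    ∫ s in (0:ℝ)..t, s ^ (a - 1) * (t - s) ^ (b - 1) =
      t ^ (a + b - 1) * (Real.Gamma a * Real.Gamma b / Real.Gamma (a + b)) := by
  have h := Complex.betaIntegral_scaled (a:ℂ) (b:ℂ) ht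
  rw [Complex.betaIntegral_eq_Gamma_mul_div _ _ (by simpa) (by simpa), ← Complex.ofReal_add, Complex.Gamma_ofReal,
    Complex.Gamma_ofReal, Complex.Gamma_ofReal] at h
  apply Complex.ofReal_injective
  rw [← intervalIntegral.integral_ofReal]
  push_cast
  rw [Complex.ofReal_cpow ht.le]
  push_cast at h ⊢
  rw [← h]
  apply intervalIntegral.integral_congr
  intro s hs
  rw [uIcc_of_le ht.le] at hs
  simp only
  rw [Complex.ofReal_cpow hs.1, Complex.ofReal_cpow (by linarith [hs.2])]
  push_cast
  rfl

lemma aux_beta_integrable_s16 (a b t : ℝ) (ha : 0 < a) (hb : 0 < b) (ht : 0 < t) :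
    IntervalIntegrable (fun s : ℝ => s ^ (a - 1) * (t - s) ^ (b - 1)) volume 0 t := by
  by_contra hc
  have h := aux_beta a b t ha hb ht
  rw [intervalIntegral.integral_undef hc] at h
  have h1 := Real.Gamma_pos_of_pos ha
  have h2 := Real.Gamma_pos_of_pos hb
  have h3 := Real.Gamma_pos_of_pos (add_pos ha hb)
  have : 0 < t ^ (a + b - 1) * (Real.Gamma a * Real.Gamma b / Real.Gamma (a + b)) := by positivity
  linarith

lemma aux_volterra (α : ℝ) (hα : 0 < α) (t : ℝ) (ht : 0 < t) :
    ∫ s in (0:ℝ)..t, mittagLeffler α α (-s ^ α) * (s ^ (α - 1) * (t - s) ^ (α - 1)) =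
      t ^ (α - 1) * (1 - Real.Gamma α * mittagLeffler α α (-t ^ α)) := by
  have hw := aux_beta_integrable_s16 α α t hα hα ht
  have hGp : ∀ k : ℕ, 0 < Real.Gamma ((k:ℝ) * α + α) := fun k =>
    Real.Gamma_pos_of_pos (by positivity)
  have hsum := intervalIntegral.hasSum_integral_of_dominated_convergence (μ := volume) (a := 0) (b := t)
    (F := fun (k : ℕ) s => (-s ^ α) ^ k / Real.Gamma ((k:ℝ) * α + α) * (s ^ (α - 1) * (t - s) ^ (α - 1)))
    (f := fun s => mittagLeffler α α (-s ^ α) * (s ^ (α - 1) * (t - s) ^ (α - 1)))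
    (fun (k : ℕ) s => (t ^ α) ^ k / Real.Gamma ((k:ℝ) * α + α) * (s ^ (α - 1) * (t - s) ^ (α - 1)))
    (by
      intro k
      apply Measurable.aestronglyMeasurable
      fun_prop)
    (by
      intro k
      filter_upwards with s hs
      rw [uIoc_of_le ht.le] at hs
      have hs0 := hs.1
      have hs1 : 0 ≤ t - s := by linarith [hs.2]
      have hst := hs.2
      rw [norm_mul, norm_div, norm_pow, norm_neg, Real.norm_of_nonneg (hGp k).le,
        Real.norm_of_nonneg (by positivity : (0:ℝ) ≤ s ^ α),
        Real.norm_of_nonneg (by positivity : (0:ℝ) ≤ s ^ (α - 1) * (t - s) ^ (α - 1))]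
      have := hGp k
      gcongr)
    (by
      filter_upwards with s hs
      exact (aux_summable α hα _).mul_right _)
    (by
      simp_rw [tsum_mul_right]
      exact hw.const_mul _)
    (by
      filter_upwards with s hs
      exact (aux_summable α hα _).hasSum.mul_right _)
  rw [← hsum.tsum_eq]
  have hterm : ∀ k : ℕ, ∫ s in (0:ℝ)..t, (-s ^ α) ^ k / Real.Gamma ((k:ℝ) * α + α) * (s ^ (α - 1) * (t - s) ^ (α - 1))
      = -(t ^ (α - 1) * Real.Gamma α) * ((-t ^ α) ^ (k+1) / Real.Gamma (((k+1 : ℕ):ℝ) * α + α)) := by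
    intro k
    have hb := aux_beta ((k:ℝ) * α + α) α t (by positivity) hα ht
    have e1 : ∫ s in (0:ℝ)..t, (-s ^ α) ^ k / Real.Gamma ((k:ℝ) * α + α) * (s ^ (α - 1) * (t - s) ^ (α - 1))
       = ∫ s in (0:ℝ)..t, ((-1) ^ k / Real.Gamma ((k:ℝ) * α + α)) * (s ^ ((k:ℝ) * α + α - 1) * (t - s) ^ (α - 1)) := by
      apply intervalIntegral.integral_congr_ae
      filter_upwards with s hs
      rw [uIoc_of_le ht.le] at hs
      have hs0 := hs.1
      have : s ^ ((k:ℝ) * α + α - 1) = (s ^ α) ^ k * s ^ (α - 1) := by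
        rw [← Real.rpow_natCast, ← Real.rpow_mul hs0.le, ← Real.rpow_add hs0]; congr 1; ring
      rw [this, neg_pow]; ring
    rw [e1, intervalIntegral.integral_const_mul, hb]
    have e2 : t ^ ((k:ℝ) * α + α + α - 1) = (t ^ α) ^ (k+1) * t ^ (α - 1) := by
      rw [← Real.rpow_natCast, ← Real.rpow_mul ht.le, ← Real.rpow_add ht]; congr 1; push_cast; ring
    have e3 : ((k+1 : ℕ):ℝ) * α + α = (k:ℝ) * α + α + α := by push_cast; ring
    rw [e2, e3, neg_pow (t ^ α)]
    have := (hGp k).ne'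
    field_simp
    ring
  simp_rw [hterm]
  rw [tsum_mul_left]
  have hz := (aux_summable α hα (-t ^ α)).tsum_eq_zero_add
  have hGα := (Real.Gamma_pos_of_pos hα).ne'
  have hz' : mittagLeffler α α (-t ^ α) = 1 / Real.Gamma α +
      ∑' k : ℕ, ((-t ^ α) ^ (k+1) / Real.Gamma (((k+1 : ℕ):ℝ) * α + α)) := by
    unfold mittagLeffler
    rw [hz]
    simp
  rw [hz']
  field_simp
  ring

lemma aux_pos (α : ℝ) (hα : 0 < α) (hα1 : α ≤ 1) (x : ℝ) (hx : 0 ≤ x) :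
    0 < mittagLeffler α α (-x ^ α) := by
  set F : ℝ → ℝ := fun s => mittagLeffler α α (-s ^ α) with hF
  have hG := Real.Gamma_pos_of_pos hα
  have hFc : Continuous F :=
    (aux_continuous α hα).comp (Real.continuous_rpow_const hα.le).neg
  have hF0 : 0 < F 0 := by
    have : F 0 = 1 / Real.Gamma α := by
      simp only [hF, Real.zero_rpow hα.ne', mittagLeffler, neg_zero]
      rw [tsum_eq_single 0]
      · simp
      · intro k hk; simp [hk]
    rw [this]; positivity
  by_contra hcon
  have hcon : F x ≤ 0 := not_lt.1 hcon
  set S : Set ℝ := Icc 0 x ∩ {t | F t ≤ 0} with hS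
  have hSc : IsCompact S := isCompact_Icc.inter_right (isClosed_le hFc continuous_const)
  have hSne : S.Nonempty := ⟨x, ⟨hx, le_rfl⟩, hcon⟩
  obtain ⟨t0, ht0S, ht0min⟩ := hSc.exists_isLeast hSne
  have hFt0 : F t0 ≤ 0 := ht0S.2
  have ht0 : 0 < t0 := by
    rcases ht0S.1.1.lt_or_eq with h | h
    · exact h
    · rw [← h] at hFt0; linarith
  have hFpos : ∀ s, 0 ≤ s → s < t0 → 0 < F s := by
    intro s hs hst
    by_contra hc
    have := ht0min (show s ∈ S from ⟨⟨hs, by linarith [ht0S.1.2]⟩, not_lt.1 hc⟩)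
    linarith
  -- choice of ε
  set K : ℝ := t0 ^ (1 - α) * (t0 / 2) ^ (α - 1) with hK
  have hKp : 0 < K := by positivity
  obtain ⟨ε, hε0, hε1, hε2⟩ : ∃ ε : ℝ, 0 < ε ∧ ε < t0 / 2 ∧ K * ε ^ α < Real.Gamma α * α := by
    have hc : Continuous fun ε : ℝ => K * ε ^ α :=
      continuous_const.mul (Real.continuous_rpow_const hα.le)
    have h1 : ∀ᶠ ε : ℝ in 𝓝 0, K * ε ^ α < Real.Gamma α * α := by
      apply hc.continuousAt.eventually_lt continuousAt_const
      simp [Real.zero_rpow hα.ne']; positivity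
    have h2 : ∀ᶠ ε : ℝ in 𝓝 0, ε < t0 / 2 := eventually_lt_nhds (by positivity)
    have h3 := ((h1.and h2).filter_mono (nhdsWithin_le_nhds (s := Ioi 0))).and self_mem_nhdsWithin
    obtain ⟨ε, ⟨ha, hb⟩, hc0⟩ := h3.exists
    exact ⟨ε, hc0, hb, ha⟩
  obtain ⟨m, hm, hmax⟩ := isCompact_Icc.exists_isMaxOn (s := Icc (t0 - ε) t0)
    ⟨t0, by constructor <;> linarith⟩ hFc.continuousOn
  have hM : 0 < F m := by
    have h1 : F (t0 - ε) ≤ F m := hmax (show t0 - ε ∈ Icc (t0 - ε) t0 by constructor <;> linarith)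
    have h2 := hFpos (t0 - ε) (by linarith) (by linarith)
    linarith
  have hmt : m < t0 := by
    rcases hm.2.lt_or_eq with h | h
    · exact h
    · rw [h] at hM; linarith
  have hm0 : 0 < m := by linarith [hm.1]
  -- Volterra equations
  have hV0 := aux_volterra α hα t0 ht0
  have hVm := aux_volterra α hα m hm0
  have hI0 : IntervalIntegrable (fun s => F s * (s ^ (α - 1) * (t0 - s) ^ (α - 1))) volume 0 t0 :=
    (aux_beta_integrable_s16 α α t0 hα hα ht0).continuousOn_mul hFc.continuousOn
  have hIm : IntervalIntegrable (fun s => F s * (s ^ (α - 1) * (m - s) ^ (α - 1))) volume 0 m :=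
    (aux_beta_integrable_s16 α α m hα hα hm0).continuousOn_mul hFc.continuousOn
  have hI1 : IntervalIntegrable (fun s => F s * (s ^ (α - 1) * (t0 - s) ^ (α - 1))) volume 0 m :=
    hI0.mono_set (by rw [uIcc_of_le hm0.le, uIcc_of_le ht0.le]; exact Icc_subset_Icc_right hmt.le)
  have hI2 : IntervalIntegrable (fun s => F s * (s ^ (α - 1) * (t0 - s) ^ (α - 1))) volume m t0 :=
    hI0.mono_set (by rw [uIcc_of_le hmt.le, uIcc_of_le ht0.le]; exact Icc_subset_Icc_left hm0.le)
  have hsplit := intervalIntegral.integral_add_adjacent_intervals hI1 hI2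
  set J := ∫ s in m..t0, F s * (s ^ (α - 1) * (t0 - s) ^ (α - 1)) with hJ
  have hcomp : (m / t0) ^ (α - 1) * ∫ s in (0:ℝ)..m, F s * (s ^ (α - 1) * (t0 - s) ^ (α - 1))
      ≤ ∫ s in (0:ℝ)..m, F s * (s ^ (α - 1) * (m - s) ^ (α - 1)) := by
    rw [← intervalIntegral.integral_const_mul]
    apply intervalIntegral.integral_mono_on_of_le_Ioo hm0.le (hI1.const_mul _) hIm
    intro s hs
    have hs0 := hs.1
    have hsm : 0 < m - s := by linarith [hs.2]
    have hst : 0 < t0 - s := by linarith [hs.2]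
    have hFs := hFpos s hs0.le (by linarith)
    have : (m / t0) ^ (α - 1) * (t0 - s) ^ (α - 1) ≤ (m - s) ^ (α - 1) := by
      rw [← Real.mul_rpow (by positivity) hst.le]
      apply Real.rpow_le_rpow_of_nonpos hsm _ (by linarith)
      rw [div_mul_eq_mul_div, le_div_iff₀ ht0]
      nlinarith
    calc (m / t0) ^ (α - 1) * (F s * (s ^ (α - 1) * (t0 - s) ^ (α - 1)))
        = F s * s ^ (α - 1) * ((m / t0) ^ (α - 1) * (t0 - s) ^ (α - 1)) := by ring
      _ ≤ F s * s ^ (α - 1) * (m - s) ^ (α - 1) := by gcongr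
      _ = _ := by ring
  have hJle : J ≤ F m * (t0 / 2) ^ (α - 1) * (ε ^ α / α) := by
    have hb : IntervalIntegrable (fun s : ℝ => (t0 - s) ^ (α - 1)) volume m t0 := by
      have := (intervalIntegral.intervalIntegrable_rpow' (a := t0 - m) (b := 0)
        (show -1 < α - 1 by linarith)).comp_sub_left t0
      simpa using this
    have h1 : J ≤ ∫ s in m..t0, F m * (t0 / 2) ^ (α - 1) * (t0 - s) ^ (α - 1) := by
      apply intervalIntegral.integral_mono_on_of_le_Ioo hmt.le hI2 (hb.const_mul _)
      intro s hs
      have hst : 0 < t0 - s := by linarith [hs.2]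
      have hs0 : 0 < s := by linarith [hs.1]
      have h1 : F s ≤ F m := hmax (show s ∈ Icc (t0 - ε) t0 from ⟨by linarith [hs.1, hm.1], hs.2.le⟩)
      have h2 : s ^ (α - 1) ≤ (t0 / 2) ^ (α - 1) :=
        Real.rpow_le_rpow_of_nonpos (by positivity) (by linarith [hs.1, hm.1]) (by linarith)
      rw [← mul_assoc]
      gcongr
    have h2 : ∫ s in m..t0, (t0 - s) ^ (α - 1) = (t0 - m) ^ α / α := by
      rw [intervalIntegral.integral_comp_sub_left (fun y : ℝ => y ^ (α - 1)) t0,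
        integral_rpow (Or.inl (by linarith))]
      simp [Real.zero_rpow hα.ne']
    rw [intervalIntegral.integral_const_mul, h2] at h1
    refine h1.trans ?_
    have : (t0 - m) ^ α ≤ ε ^ α := Real.rpow_le_rpow (by linarith) (by linarith [hm.1]) hα.le
    gcongr
  have hA : t0 ^ (α - 1) - J ≤ ∫ s in (0:ℝ)..m, F s * (s ^ (α - 1) * (t0 - s) ^ (α - 1)) := by
    have : t0 ^ (α - 1) ≤ t0 ^ (α - 1) * (1 - Real.Gamma α * F t0) := by
      have h1 : 0 < t0 ^ (α - 1) := by positivity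
      have h2 : 0 ≤ Real.Gamma α * (- F t0) := mul_nonneg hG.le (by linarith)
      nlinarith
    have hV0' : ∫ s in (0:ℝ)..t0, F s * (s ^ (α - 1) * (t0 - s) ^ (α - 1)) =
      t0 ^ (α - 1) * (1 - Real.Gamma α * F t0) := hV0
    linarith
  have hVm' : ∫ s in (0:ℝ)..m, F s * (s ^ (α - 1) * (m - s) ^ (α - 1)) =
      m ^ (α - 1) * (1 - Real.Gamma α * F m) := hVm
  have hr : (m / t0) ^ (α - 1) = m ^ (α - 1) * t0 ^ (1 - α) := by
    rw [Real.div_rpow hm0.le ht0.le, div_eq_mul_inv, ← Real.rpow_neg ht0.le]; congr 2; ring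
  have hr2 : t0 ^ (1 - α) * t0 ^ (α - 1) = 1 := by rw [← Real.rpow_add ht0]; simp
  have hmp : 0 < m ^ (α - 1) := by positivity
  have htp : 0 < t0 ^ (1 - α) := by positivity
  have h1 : (m / t0) ^ (α - 1) * (t0 ^ (α - 1) - J) ≤ m ^ (α - 1) * (1 - Real.Gamma α * F m) := by
    rw [← hVm']
    refine le_trans ?_ hcomp
    gcongr
  rw [hr, mul_assoc] at h1
  have h2 := le_of_mul_le_mul_left h1 hmp
  have h3 : Real.Gamma α * F m ≤ t0 ^ (1 - α) * J := by
    rw [mul_sub, hr2] at h2; linarith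
  have h4 : t0 ^ (1 - α) * J ≤ t0 ^ (1 - α) * (F m * (t0 / 2) ^ (α - 1) * (ε ^ α / α)) := by gcongr
  have h5 : t0 ^ (1 - α) * (F m * (t0 / 2) ^ (α - 1) * (ε ^ α / α)) = F m * (K * ε ^ α / α) := by
    rw [hK]; ring
  have h6 : K * ε ^ α / α < Real.Gamma α := by rwa [div_lt_iff₀ hα]
  nlinarith

lemma aux_le (α : ℝ) (hα : 0 < α) (hα1 : α ≤ 1) (x : ℝ) (hx : 0 < x) :
    mittagLeffler α α (-x ^ α) ≤ 1 / Real.Gamma α := by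
  have hG := Real.Gamma_pos_of_pos hα
  have hV := aux_volterra α hα x hx
  have h0 : 0 ≤ ∫ s in (0:ℝ)..x, mittagLeffler α α (-s ^ α) * (s ^ (α - 1) * (x - s) ^ (α - 1)) := by
    apply intervalIntegral.integral_nonneg hx.le
    intro s hs
    have := aux_pos α hα hα1 s hs.1
    have h1 : 0 ≤ x - s := by linarith [hs.2]
    have h2 := hs.1
    positivity
  rw [hV] at h0
  have hp : 0 < x ^ (α - 1) := by positivity
  have := nonneg_of_mul_nonneg_right h0 hp
  rw [le_div_iff₀ hG]; linarith

lemma aux_bound (α : ℝ) (hα : 0 < α) (hα1 : α ≤ 1) (y : ℝ) (hy : 0 < y) :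
    0 ≤ mittagLeffler α α (-y) ∧ mittagLeffler α α (-y) ≤ 1 / Real.Gamma α := by
  have h : (y ^ (1 / α)) ^ α = y := by
    rw [← Real.rpow_mul hy.le, one_div_mul_cancel hα.ne', Real.rpow_one]
  have h1 := aux_pos α hα hα1 (y ^ (1 / α)) (by positivity)
  have h2 := aux_le α hα hα1 (y ^ (1 / α)) (by positivity)
  rw [h] at h1 h2
  exact ⟨h1.le, h2⟩

lemma aux_pointwise (a b d u v : ℝ) (hb : b < 0) (hd : 0 ≤ d) (hda : a + d ≤ 0)
    (hdb : b + d ≤ 0) (hu : 0 < u) (hv : 0 < v) :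
    u ^ a * |u - v| ^ b ≤ (v / 2) ^ (-d) * (u ^ (a + b + d) + |u - v| ^ (a + b + d)) := by
  have hp1 : 0 ≤ u ^ (a + b + d) := by positivity
  have hp2 : 0 ≤ |u - v| ^ (a + b + d) := by positivity
  rcases eq_or_ne u v with rfl | huv
  · rw [sub_self, abs_zero, Real.zero_rpow hb.ne, mul_zero]
    rw [sub_self, abs_zero] at hp2
    positivity
  have hw : 0 < |u - v| := abs_pos.2 (sub_ne_zero.2 huv)
  rcases le_total u (v / 2) with h | h
  · have hvw : v / 2 ≤ |u - v| := by rw [abs_sub_comm]; exact le_trans (by linarith) (le_abs_self _)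
    have e : |u - v| ^ b = |u - v| ^ (-d) * |u - v| ^ (b + d) := by
      rw [← Real.rpow_add hw]; congr 1; ring
    have e2 : u ^ (a + b + d) = u ^ a * u ^ (b + d) := by
      rw [← Real.rpow_add hu]; congr 1; ring
    have h1 : |u - v| ^ (-d) ≤ (v / 2) ^ (-d) :=
      Real.rpow_le_rpow_of_nonpos (by positivity) hvw (by linarith)
    have h2 : |u - v| ^ (b + d) ≤ u ^ (b + d) :=
      Real.rpow_le_rpow_of_nonpos hu (by linarith) hdb
    calc u ^ a * |u - v| ^ b = u ^ a * (|u - v| ^ (-d) * |u - v| ^ (b + d)) := by rw [e]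
      _ ≤ u ^ a * ((v / 2) ^ (-d) * u ^ (b + d)) := by gcongr
      _ = (v / 2) ^ (-d) * u ^ (a + b + d) := by rw [e2]; ring
      _ ≤ _ := by gcongr; linarith
  · have huw : |u - v| ≤ u := by rw [abs_le]; constructor <;> linarith
    have e : u ^ a = u ^ (-d) * u ^ (a + d) := by
      rw [← Real.rpow_add hu]; congr 1; ring
    have e2 : |u - v| ^ (a + b + d) = |u - v| ^ (a + d) * |u - v| ^ b := by
      rw [← Real.rpow_add hw]; congr 1; ring
    have h1 : u ^ (-d) ≤ (v / 2) ^ (-d) :=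
      Real.rpow_le_rpow_of_nonpos (by positivity) h (by linarith)
    have h2 : u ^ (a + d) ≤ |u - v| ^ (a + d) :=
      Real.rpow_le_rpow_of_nonpos hw huw hda
    calc u ^ a * |u - v| ^ b = u ^ (-d) * u ^ (a + d) * |u - v| ^ b := by rw [e]
      _ ≤ (v / 2) ^ (-d) * |u - v| ^ (a + d) * |u - v| ^ b := by gcongr
      _ = (v / 2) ^ (-d) * |u - v| ^ (a + b + d) := by rw [e2]; ring
      _ ≤ _ := by gcongr; linarith

lemma aux_int_left (σ q : ℝ) (hσ : -1 < σ) (hq : 0 ≤ q) :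
    IntervalIntegrable (fun p : ℝ => (q - p) ^ σ) volume 0 q ∧
      ∫ p in (0:ℝ)..q, (q - p) ^ σ = q ^ (σ + 1) / (σ + 1) := by
  constructor
  · have := (intervalIntegral.intervalIntegrable_rpow' (a := q) (b := 0) hσ).comp_sub_left q
    simpa using this
  · rw [intervalIntegral.integral_comp_sub_left (fun y : ℝ => y ^ σ) q,
        integral_rpow (Or.inl hσ)]
    have : σ + 1 ≠ 0 := by linarith
    simp [Real.zero_rpow this]

lemma aux_int_abs (σ t q : ℝ) (hσ : -1 < σ) (hq : 0 < q) (hqt : q < t) :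
    IntervalIntegrable (fun p : ℝ => |p - q| ^ σ) volume 0 t ∧
      ∫ p in (0:ℝ)..t, |p - q| ^ σ ≤ 2 * (t ^ (σ + 1) / (σ + 1)) := by
  have hs : 0 < σ + 1 := by linarith
  obtain ⟨i1, v1⟩ := aux_int_left σ q hσ hq.le
  have c1 : EqOn (fun p : ℝ => (q - p) ^ σ) (fun p : ℝ => |p - q| ^ σ) (uIcc 0 q) := by
    intro p hp
    rw [uIcc_of_le hq.le] at hp
    simp only
    rw [abs_sub_comm, abs_of_nonneg (by linarith [hp.2])]
  have c2 : EqOn (fun p : ℝ => (p - q) ^ σ) (fun p : ℝ => |p - q| ^ σ) (uIcc q t) := by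
    intro p hp
    rw [uIcc_of_le hqt.le] at hp
    simp only
    rw [abs_of_nonneg (by linarith [hp.1])]
  have i2 : IntervalIntegrable (fun p : ℝ => (p - q) ^ σ) volume q t := by
    have := (intervalIntegral.intervalIntegrable_rpow' (a := 0) (b := t - q) hσ).comp_sub_right q
    simpa using this
  have v2 : ∫ p in q..t, (p - q) ^ σ = (t - q) ^ (σ + 1) / (σ + 1) := by
    rw [intervalIntegral.integral_comp_sub_right (fun y : ℝ => y ^ σ) q,
        integral_rpow (Or.inl hσ)]
    simp [Real.zero_rpow hs.ne']
  have j1 := i1.congr (c1.mono uIoc_subset_uIcc)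
  have j2 := i2.congr (c2.mono uIoc_subset_uIcc)
  refine ⟨j1.trans j2, ?_⟩
  rw [← intervalIntegral.integral_add_adjacent_intervals j1 j2,
    ← intervalIntegral.integral_congr c1, ← intervalIntegral.integral_congr c2, v1, v2, two_mul]
  have h1 : q ^ (σ + 1) ≤ t ^ (σ + 1) := Real.rpow_le_rpow hq.le hqt.le hs.le
  have h2 : (t - q) ^ (σ + 1) ≤ t ^ (σ + 1) := Real.rpow_le_rpow (by linarith) (by linarith) hs.le
  gcongr

lemma aux_mono {t : ℝ} (ht : 0 < t) {f g : ℝ → ℝ} (hf : ∀ p ∈ Ioo 0 t, 0 ≤ f p)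
    (hg : IntervalIntegrable g volume 0 t) (hfg : ∀ p ∈ Ioo 0 t, f p ≤ g p) :
    ∫ p in (0:ℝ)..t, f p ≤ ∫ p in (0:ℝ)..t, g p := by
  rw [intervalIntegral.integral_of_le ht.le, intervalIntegral.integral_of_le ht.le,
    integral_Ioc_eq_integral_Ioo, integral_Ioc_eq_integral_Ioo]
  rw [intervalIntegrable_iff_integrableOn_Ioo_of_le ht.le] at hg
  apply integral_mono_of_nonneg _ hg
  · filter_upwards [ae_restrict_mem measurableSet_Ioo] with p hp using hfg p hp
  · filter_upwards [ae_restrict_mem measurableSet_Ioo] with p hp using hf p hp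

lemma aux_nonneg {t : ℝ} (ht : 0 < t) {f : ℝ → ℝ} (hf : ∀ p ∈ Ioo 0 t, 0 ≤ f p) :
    0 ≤ ∫ p in (0:ℝ)..t, f p := by
  rw [intervalIntegral.integral_of_le ht.le, integral_Ioc_eq_integral_Ioo]
  exact setIntegral_nonneg measurableSet_Ioo hf

theorem double_integral_bound (α H : ℝ) (hα0 : 0 < α) (hα1 : α ≤ 1)
    (hH0 : 1/2 < H) (hH1 : H < 1) (hαH : 1 < α + H) :
    ∃ C : ℝ, 0 < C ∧ ∀ lam t : ℝ, 0 < lam → 0 < t →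
      (∫ q in (0:ℝ)..t, ∫ p in (0:ℝ)..t,
          (t - p) ^ (α - 1) * mittagLeffler α α (-lam * (t - p) ^ α)
          * (t - q) ^ (α - 1) * mittagLeffler α α (-lam * (t - q) ^ α)
          * |p - q| ^ (2*H - 2))
        ≤ C * t ^ (2*α + 2*H - 2) := by
  obtain ⟨d, hd0, hd1, hd2, hd3, hd4⟩ : ∃ d : ℝ, 0 ≤ d ∧ d ≤ 1 - α ∧ d ≤ 2 - 2 * H ∧ d < α ∧
      2 - 2 * H - α < d := by
    refine ⟨min (1 - α) (1 - H), le_min (by linarith) (by linarith), min_le_left _ _,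
      (min_le_right _ _).trans (by linarith), (min_le_right _ _).trans_lt (by linarith),
      lt_min (by linarith) (by linarith)⟩
  have hG := Real.Gamma_pos_of_pos hα0
  set c := 1 / Real.Gamma α with hc
  have hcp : 0 < c := by positivity
  set σ := (α - 1) + (2 * H - 2) + d with hσdef
  have hσ : -1 < σ := by rw [hσdef]; linarith
  have hσ1 : 0 < σ + 1 := by linarith
  have hαd : 0 < α - d := by linarith
  refine ⟨c ^ 2 * 2 ^ d * (3 / (σ + 1)) * (1 / (α - d)), by positivity, ?_⟩
  intro lam t hlam ht
  have hE : ∀ p ∈ Ioo 0 t, 0 ≤ mittagLeffler α α (-lam * (t - p) ^ α) ∧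
      mittagLeffler α α (-lam * (t - p) ^ α) ≤ c := by
    intro p hp
    have h : 0 < t - p := by linarith [hp.2]
    rw [neg_mul]
    exact aux_bound α hα0 hα1 _ (by positivity)
  have hinner : ∀ q ∈ Ioo 0 t, (∫ p in (0:ℝ)..t,
          (t - p) ^ (α - 1) * mittagLeffler α α (-lam * (t - p) ^ α)
          * (t - q) ^ (α - 1) * mittagLeffler α α (-lam * (t - q) ^ α)
          * |p - q| ^ (2*H - 2)) ≤
      (c ^ 2 * 2 ^ d * (3 / (σ + 1)) * t ^ (σ + 1)) * (t - q) ^ (α - d - 1) := by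
    intro q hq
    have hv : 0 < t - q := by linarith [hq.2]
    obtain ⟨i1, v1⟩ := aux_int_left σ t hσ ht.le
    obtain ⟨i2, v2⟩ := aux_int_abs σ t q hσ hq.1 hq.2
    have hstep := aux_mono ht (f := fun p => (t - p) ^ (α - 1) * mittagLeffler α α (-lam * (t - p) ^ α)
          * (t - q) ^ (α - 1) * mittagLeffler α α (-lam * (t - q) ^ α)
          * |p - q| ^ (2*H - 2))
      (g := fun p => (c ^ 2 * (t - q) ^ (α - 1) * ((t - q) / 2) ^ (-d)) * ((t - p) ^ σ + |p - q| ^ σ))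
      (by
        intro p hp
        have h1 := (hE p hp).1
        have h2 := (hE q hq).1
        have h3 : 0 < t - p := by linarith [hp.2]
        positivity)
      ((i1.add i2).const_mul _)
      (by
        intro p hp
        obtain ⟨h1, h1'⟩ := hE p hp
        obtain ⟨h2, h2'⟩ := hE q hq
        have h3 : 0 < t - p := by linarith [hp.2]
        have hpw := aux_pointwise (α - 1) (2 * H - 2) d (t - p) (t - q) (by linarith) hd0
          (by linarith) (by linarith) h3 hv
        have habs : |t - p - (t - q)| = |p - q| := by
          rw [abs_sub_comm]; congr 1; ring
        rw [habs, ← hσdef] at hpw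
        calc (t - p) ^ (α - 1) * mittagLeffler α α (-lam * (t - p) ^ α)
          * (t - q) ^ (α - 1) * mittagLeffler α α (-lam * (t - q) ^ α)
          * |p - q| ^ (2*H - 2) ≤ (t - p) ^ (α - 1) * c * (t - q) ^ (α - 1) * c * |p - q| ^ (2*H - 2) := by
                gcongr
          _ = c ^ 2 * (t - q) ^ (α - 1) * ((t - p) ^ (α - 1) * |p - q| ^ (2*H - 2)) := by ring
          _ ≤ c ^ 2 * (t - q) ^ (α - 1) * (((t - q) / 2) ^ (-d) * ((t - p) ^ σ + |p - q| ^ σ)) := by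
                gcongr
          _ = _ := by ring)
    refine hstep.trans ?_
    rw [intervalIntegral.integral_const_mul, intervalIntegral.integral_add i1 i2, v1]
    have e1 : ((t - q) / 2) ^ (-d) = 2 ^ d * (t - q) ^ (-d) := by
      rw [Real.div_rpow hv.le (by norm_num), Real.rpow_neg (by norm_num : (0:ℝ) ≤ 2)]
      field_simp
    have e2 : (t - q) ^ (α - d - 1) = (t - q) ^ (α - 1) * (t - q) ^ (-d) := by
      rw [← Real.rpow_add hv]; congr 1; ring
    calc _ ≤ c ^ 2 * (t - q) ^ (α - 1) * ((t - q) / 2) ^ (-d) *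
          (t ^ (σ + 1) / (σ + 1) + 2 * (t ^ (σ + 1) / (σ + 1))) := by gcongr
      _ = _ := by rw [e1, e2]; ring
  obtain ⟨i3, v3⟩ := aux_int_left (α - d - 1) t (by linarith) ht.le
  have hstep := aux_mono ht (f := fun q => ∫ p in (0:ℝ)..t,
          (t - p) ^ (α - 1) * mittagLeffler α α (-lam * (t - p) ^ α)
          * (t - q) ^ (α - 1) * mittagLeffler α α (-lam * (t - q) ^ α)
          * |p - q| ^ (2*H - 2))
      (by
        intro q hq
        apply aux_nonneg ht
        intro p hp
        have h1 := (hE p hp).1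
        have h2 := (hE q hq).1
        have h3 : 0 < t - p := by linarith [hp.2]
        have hv : 0 < t - q := by linarith [hq.2]
        positivity)
      (i3.const_mul _) hinner
  refine hstep.trans (le_of_eq ?_)
  rw [intervalIntegral.integral_const_mul, v3]
  have e : t ^ (2*α + 2*H - 2) = t ^ (σ + 1) * t ^ (α - d) := by
    rw [← Real.rpow_add ht]; congr 1; rw [hσdef]; ring
  rw [e, sub_add_cancel]
  ring
end

section
/- Let 0 < α ≤ 1, λ > 0, T > 0, and let h : (0,T) → ℝ be a measurable, essentially bounded function for which there exists c_h > 0 with h(τ) ≥ c_h for almost every τ ∈ (0,T). Then ∫_0^T (T-τ)^{α-1} E_{α,α}(-λ (T-τ)^α) h(τ) dτ ≥ c_h T^α E_{α,α}(-λ T^α) > 0. -/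
open Real MeasureTheory intervalIntegral

/-- Coefficient of `z ^ n` in `(1 - z) ^ (-a)`. -/
noncomputable def mlP (a : ℝ) (n : ℕ) : ℝ := ∏ j ∈ Finset.range n, ((a + j) / (j + 1))

lemma mlP_zero (a : ℝ) : mlP a 0 = 1 := by simp [mlP]

lemma mlP_succ (a : ℝ) (n : ℕ) : mlP a (n + 1) = mlP a n * ((a + n) / (n + 1)) := by
  rw [mlP, Finset.prod_range_succ, mlP]

lemma mlP_succ' (a : ℝ) (n : ℕ) : ((n : ℝ) + 1) * mlP a (n + 1) = (a + n) * mlP a n := by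
  rw [mlP_succ]
  have : (n : ℝ) + 1 ≠ 0 := by positivity
  field_simp

lemma mlP_zero_left (n : ℕ) : mlP 0 (n + 1) = 0 := by
  simp [mlP, Finset.prod_range_succ']

lemma mlP_nonneg {a : ℝ} (ha : 0 ≤ a) (n : ℕ) : 0 ≤ mlP a n :=
  Finset.prod_nonneg fun j _ => by positivity

lemma mlP_neg {α : ℝ} (h0 : 0 < α) (h1 : α ≤ 1) (n : ℕ) : mlP (-α) (n + 1) ≤ 0 := by
  induction n with
  | zero => simp [mlP]; exact h0.le
  | succ n ih =>
    rw [mlP_succ]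
    apply mul_nonpos_of_nonpos_of_nonneg ih
    have : (0 : ℝ) ≤ n := by positivity
    push_cast
    apply div_nonneg <;> linarith

lemma mlP_le {a : ℝ} (ha : 0 ≤ a) (n : ℕ) : mlP a n ≤ (1 + a) ^ n := by
  induction n with
  | zero => simp [mlP]
  | succ n ih =>
    rw [mlP_succ, pow_succ]
    have hn : (0 : ℝ) ≤ n := by positivity
    have : (a + n) / (n + 1) ≤ 1 + a := by
      rw [div_le_iff₀ (by positivity)]
      nlinarith [mul_nonneg ha hn]
    exact mul_le_mul ih this (by positivity) (by positivity)

lemma mlP_vandermonde (a b : ℝ) (n : ℕ) :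
    ∑ p ∈ Finset.HasAntidiagonal.antidiagonal n, mlP a p.1 * mlP b p.2 = mlP (a + b) n := by
  induction n with
  | zero => simp [mlP_zero]
  | succ n ih =>
    have hn : (n : ℝ) + 1 ≠ 0 := by positivity
    apply mul_left_cancel₀ hn
    rw [mlP_succ', ← ih, Finset.mul_sum]
    have h1 : ∑ p ∈ Finset.HasAntidiagonal.antidiagonal (n + 1), ((n : ℝ) + 1) * (mlP a p.1 * mlP b p.2)
        = ∑ p ∈ Finset.HasAntidiagonal.antidiagonal (n + 1), ((p.1 : ℝ) * mlP a p.1) * mlP b p.2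
        + ∑ p ∈ Finset.HasAntidiagonal.antidiagonal (n + 1), mlP a p.1 * ((p.2 : ℝ) * mlP b p.2) := by
      rw [← Finset.sum_add_distrib]
      refine Finset.sum_congr rfl fun p hp => ?_
      have : (p.1 : ℝ) + p.2 = n + 1 := by
        exact_mod_cast Finset.HasAntidiagonal.mem_antidiagonal.1 hp
      rw [← this]; ring
    rw [h1, Finset.Nat.sum_antidiagonal_succ, Finset.Nat.sum_antidiagonal_succ']
    simp only [Nat.cast_zero, zero_mul, mul_zero, zero_add, Nat.cast_add, Nat.cast_one]
    rw [← Finset.sum_add_distrib, Finset.mul_sum]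
    refine Finset.sum_congr rfl fun p hp => ?_
    have : (p.1 : ℝ) + p.2 = n := by
      exact_mod_cast Finset.HasAntidiagonal.mem_antidiagonal.1 hp
    rw [mlP_succ', mlP_succ', ← this]; ring


lemma mlP_le_exp {a : ℝ} (ha : 0 ≤ a) {J n : ℕ} (h : J ≤ n) :
    mlP a n ≤ (1 + a) ^ J * Real.exp ((a - 1) * ((harmonic n : ℝ) - (harmonic J : ℝ))) := by
  induction n, h using Nat.le_induction with
  | base => simpa using mlP_le ha J
  | succ n hn ih =>
    rw [mlP_succ, harmonic_succ]
    have e : (a - 1) * (((harmonic n + (↑(n + 1))⁻¹ : ℚ) : ℝ) - (harmonic J : ℝ))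
      = (a - 1) * ((harmonic n : ℝ) - (harmonic J : ℝ)) + (a - 1) / (n + 1) := by
      push_cast
      ring
    rw [e, Real.exp_add, ← mul_assoc]
    apply mul_le_mul ih _ (by positivity) (by positivity)
    have := Real.add_one_le_exp ((a - 1) / ((n : ℝ) + 1))
    refine le_trans (le_of_eq ?_) this
    have : (n : ℝ) + 1 ≠ 0 := by positivity
    field_simp
    ring

lemma mlP_bound {a : ℝ} (ha : 0 ≤ a) {J n : ℕ} (h : J ≤ n) (hn : 1 ≤ n) :
    (n : ℝ) ^ (1 - a) * mlP a n ≤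
      (1 + a) ^ J * Real.exp (harmonic J : ℝ) * Real.exp (a * (1 - (harmonic J : ℝ))) := by
  have hn' : (0 : ℝ) < n := by exact_mod_cast hn
  have h1 := harmonic_le_one_add_log n
  have h2 := log_add_one_le_harmonic n
  have h3 : Real.log n ≤ Real.log (n + 1) := Real.log_le_log hn' (by linarith)
  push_cast at h2
  rw [Real.rpow_def_of_pos hn']
  calc _ ≤ Real.exp (Real.log n * (1 - a)) * ((1 + a) ^ J *
        Real.exp ((a - 1) * ((harmonic n : ℝ) - (harmonic J : ℝ)))) := by
        gcongr; exact mlP_le_exp ha h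
    _ = (1 + a) ^ J * Real.exp (Real.log n * (1 - a) +
          (a - 1) * ((harmonic n : ℝ) - (harmonic J : ℝ))) := by rw [Real.exp_add]; ring
    _ ≤ _ := by
      rw [mul_assoc, ← Real.exp_add]
      refine mul_le_mul_of_nonneg_left (Real.exp_le_exp.2 ?_) (by positivity)
      rcases le_total 1 a with h | h <;> nlinarith

open Filter Topology in
lemma mlP_tendsto {a : ℝ} (ha : 0 < a) :
    Tendsto (fun n : ℕ => (n : ℝ) ^ (1 - a) * mlP a n) atTop (𝓝 (Real.Gamma a)⁻¹) := by
  have h1 := (Real.GammaSeq_tendsto_Gamma a).inv₀ (Real.Gamma_pos_of_pos ha).ne'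
  have h2 : Tendsto (fun n : ℕ => (n : ℝ) / (n + a)) atTop (𝓝 1) :=
    tendsto_natCast_div_add_atTop a
  have h3 := h1.mul h2
  rw [mul_one] at h3
  refine h3.congr' ?_
  filter_upwards [eventually_ge_atTop 1] with n hn
  have hn' : (0 : ℝ) < n := by exact_mod_cast hn
  have hP : mlP a n = (∏ j ∈ Finset.range n, (a + j)) / n.factorial := by
    rw [mlP, Finset.prod_div_distrib, ← Finset.prod_range_add_one_eq_factorial]
    push_cast; rfl
  rw [hP, Real.GammaSeq, Finset.prod_range_succ, Real.rpow_sub hn', Real.rpow_one]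
  have : a + n ≠ 0 := by positivity
  have : (n : ℝ) + a ≠ 0 := by positivity
  have : (n.factorial : ℝ) ≠ 0 := by positivity
  have : (n : ℝ) ^ a ≠ 0 := by positivity
  field_simp
  ring

/-- Polynomial times geometric. -/
lemma ml_summable_aux {α : ℝ} (hα : 0 < α) (n : ℕ) {q : ℝ} (h0 : 0 ≤ q) (h1 : q < 1) :
    Summable fun k : ℕ => q ^ k * (1 + ((k : ℝ) * α + α)) ^ n := by
  have h := summable_pow_mul_geometric_of_norm_lt_one (R := ℝ) n (r := q)
    (by rw [Real.norm_eq_abs, abs_of_nonneg h0]; exact h1)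
  have hs : Summable fun k : ℕ => (2 * (1 + α)) ^ n * ((k : ℝ) ^ n * q ^ k) := h.mul_left _
  refine Summable.of_norm_bounded_eventually_nat hs ?_
  filter_upwards [Filter.eventually_ge_atTop 1] with k hk
  have hk' : (1 : ℝ) ≤ k := by exact_mod_cast hk
  rw [Real.norm_eq_abs, abs_of_nonneg (by positivity), ← mul_assoc, ← mul_pow, mul_comm]
  gcongr
  nlinarith

/-- The discrete approximations. -/
noncomputable def mlC (α μ : ℝ) (n : ℕ) : ℝ := ∑' k : ℕ, (-μ) ^ k * mlP ((k : ℝ) * α + α) n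

lemma mlC_summable {α μ : ℝ} (hα : 0 < α) (h0 : 0 ≤ μ) (h1 : μ < 1) (n : ℕ) :
    Summable fun k : ℕ => (-μ) ^ k * mlP ((k : ℝ) * α + α) n := by
  refine Summable.of_norm_bounded (ml_summable_aux hα n h0 h1) fun k => ?_
  have hk : 0 ≤ (k : ℝ) * α + α := by positivity
  rw [norm_mul, norm_pow, norm_neg, Real.norm_eq_abs, Real.norm_eq_abs, abs_of_nonneg h0,
    abs_of_nonneg (mlP_nonneg hk n)]
  gcongr
  exact mlP_le hk n

lemma mlC_conv {α μ : ℝ} (hα : 0 < α) (h0 : 0 ≤ μ) (h1 : μ < 1) (n : ℕ) :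
    ∑ p ∈ Finset.HasAntidiagonal.antidiagonal n, mlP (-α) p.1 * mlC α μ p.2 = mlP 0 n - μ * mlC α μ n := by
  have hs : ∀ m, HasSum (fun k : ℕ => (-μ) ^ k * mlP ((k : ℝ) * α + α) m) (mlC α μ m) :=
    fun m => (mlC_summable hα h0 h1 m).hasSum
  have hL : HasSum (fun k : ℕ => ∑ p ∈ Finset.HasAntidiagonal.antidiagonal n,
      mlP (-α) p.1 * ((-μ) ^ k * mlP ((k : ℝ) * α + α) p.2))
      (∑ p ∈ Finset.HasAntidiagonal.antidiagonal n, mlP (-α) p.1 * mlC α μ p.2) :=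
    hasSum_sum fun p _ => (hs p.2).mul_left (mlP (-α) p.1)
  have e : ∀ k : ℕ, ∑ p ∈ Finset.HasAntidiagonal.antidiagonal n,
      mlP (-α) p.1 * ((-μ) ^ k * mlP ((k : ℝ) * α + α) p.2) = (-μ) ^ k * mlP ((k : ℝ) * α) n := by
    intro k
    have := mlP_vandermonde (-α) ((k : ℝ) * α + α) n
    rw [show -α + ((k : ℝ) * α + α) = k * α by ring] at this
    rw [← this, Finset.mul_sum]
    exact Finset.sum_congr rfl fun p _ => by ring
  rw [funext e] at hL
  have hR : HasSum (fun k : ℕ => (-μ) ^ (k + 1) * mlP (((k + 1 : ℕ) : ℝ) * α) n)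
      (-μ * mlC α μ n) := by
    have h3 := (hs n).mul_left (-μ)
    suffices hf : (fun k : ℕ => (-μ) ^ (k + 1) * mlP (((k + 1 : ℕ) : ℝ) * α) n) =
        fun k : ℕ => -μ * ((-μ) ^ k * mlP ((k : ℝ) * α + α) n) by
      rw [hf]; exact h3
    funext k
    push_cast
    rw [pow_succ, add_mul, one_mul, mul_comm _ (-μ), mul_assoc]
  have hR2 := (hasSum_nat_add_iff (f := fun k : ℕ => (-μ) ^ k * mlP ((k : ℝ) * α) n) 1).1 hR
  rw [hL.unique hR2, Finset.sum_range_one, pow_zero, Nat.cast_zero, zero_mul, one_mul]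
  ring

lemma mlC_rec {α μ : ℝ} (hα : 0 < α) (h0 : 0 ≤ μ) (h1 : μ < 1) (n : ℕ) :
    mlC α μ (n + 1) =
      (∑ p ∈ Finset.HasAntidiagonal.antidiagonal n, -mlP (-α) (p.1 + 1) * mlC α μ p.2) / (1 + μ) := by
  have := mlC_conv hα h0 h1 (n + 1)
  rw [Finset.Nat.sum_antidiagonal_succ, mlP_zero, mlP_zero_left] at this
  rw [eq_div_iff (by positivity)]
  simp only [neg_mul, Finset.sum_neg_distrib]
  linarith

lemma mlC_zero {α μ : ℝ} (hα : 0 < α) (h0 : 0 ≤ μ) (h1 : μ < 1) :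
    mlC α μ 0 = 1 / (1 + μ) := by
  have := mlC_conv hα h0 h1 0
  simp [mlP_zero] at this
  rw [eq_div_iff (by positivity)]
  linarith

lemma mlC_mono {α μ ν : ℝ} (hα : 0 < α) (hα1 : α ≤ 1) (h0 : 0 ≤ μ) (hμν : μ ≤ ν) (h1 : ν < 1)
    (n : ℕ) : 0 ≤ mlC α ν n ∧ mlC α ν n ≤ mlC α μ n := by
  induction n using Nat.strong_induction_on with
  | _ n ih =>
    have hν : 0 ≤ ν := h0.trans hμν
    rcases n with _ | n
    · rw [mlC_zero hα hν h1, mlC_zero hα h0 (hμν.trans_lt h1)]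
      constructor
      · positivity
      · gcongr
    · rw [mlC_rec hα hν h1, mlC_rec hα h0 (hμν.trans_lt h1)]
      have hi : ∀ p ∈ Finset.HasAntidiagonal.antidiagonal n, 0 ≤ mlC α ν p.2 ∧ mlC α ν p.2 ≤ mlC α μ p.2 := by
        intro p hp
        have := Finset.HasAntidiagonal.mem_antidiagonal.1 hp
        exact ih p.2 (by omega)
      have hb : ∀ j, 0 ≤ -mlP (-α) (j + 1) := fun j => neg_nonneg.2 (mlP_neg hα hα1 j)
      have hpos : 0 ≤ ∑ p ∈ Finset.HasAntidiagonal.antidiagonal n, -mlP (-α) (p.1 + 1) * mlC α ν p.2 :=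
        Finset.sum_nonneg fun p hp => mul_nonneg (hb _) (hi p hp).1
      have hle : ∑ p ∈ Finset.HasAntidiagonal.antidiagonal n, -mlP (-α) (p.1 + 1) * mlC α ν p.2 ≤
          ∑ p ∈ Finset.HasAntidiagonal.antidiagonal n, -mlP (-α) (p.1 + 1) * mlC α μ p.2 :=
        Finset.sum_le_sum fun p hp => mul_le_mul_of_nonneg_left (hi p hp).2 (hb _)
      constructor
      · positivity
      · exact div_le_div₀ (hpos.trans hle) hle (by positivity) (by linarith)

lemma ml_dominate {α : ℝ} (hα : 0 < α) {x : ℝ} (hx : 0 ≤ x) :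
    ∃ (J : ℕ) (B : ℕ → ℝ), 1 ≤ J ∧ Summable B ∧ ∀ n : ℕ, J ≤ n → ∀ k : ℕ,
      x ^ k * ((n : ℝ) ^ (1 - ((k : ℝ) * α + α)) * mlP ((k : ℝ) * α + α) n) ≤ B k := by
  have hlim : Filter.Tendsto (fun J : ℕ => (harmonic J : ℝ)) Filter.atTop Filter.atTop := by
    refine Filter.tendsto_atTop_mono (fun n => log_add_one_le_harmonic n) ?_
    exact Real.tendsto_log_atTop.comp (tendsto_natCast_atTop_atTop.comp
      (Filter.tendsto_add_atTop_nat 1))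
  have hl2 : Filter.Tendsto (fun J : ℕ => x * Real.exp (α * (1 - (harmonic J : ℝ))))
      Filter.atTop (nhds (x * 0)) := by
    apply Filter.Tendsto.const_mul
    apply Real.tendsto_exp_atBot.comp
    apply Filter.Tendsto.const_mul_atBot hα
    exact Filter.tendsto_atBot_add_const_left _ _ (Filter.tendsto_neg_atTop_atBot.comp hlim)
  rw [mul_zero] at hl2
  obtain ⟨J, hJ, hJ1⟩ := ((hl2.eventually_lt_const (zero_lt_one' ℝ)).and
    (Filter.eventually_ge_atTop 1)).exists
  set q := x * Real.exp (α * (1 - (harmonic J : ℝ))) with hq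
  have hq0 : 0 ≤ q := by positivity
  refine ⟨J, fun k => (q ^ k * (1 + ((k : ℝ) * α + α)) ^ J) *
    (Real.exp (harmonic J : ℝ) * Real.exp (α * (1 - (harmonic J : ℝ)))), hJ1,
    (ml_summable_aux hα J hq0 hJ).mul_right _, ?_⟩
  intro n hn k
  have hb := mlP_bound (a := (k : ℝ) * α + α) (by positivity) hn (hJ1.trans hn)
  refine (mul_le_mul_of_nonneg_left hb (by positivity : 0 ≤ x ^ k)).trans (le_of_eq ?_)
  beta_reduce
  rw [hq, mul_pow, ← Real.exp_nat_mul, show ((k : ℝ) * α + α) * (1 - (harmonic J : ℝ)) =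
    k * (α * (1 - (harmonic J : ℝ))) + α * (1 - (harmonic J : ℝ)) by ring, Real.exp_add]
  ring

open Filter Topology in
lemma ml_summable {α : ℝ} (hα : 0 < α) {x : ℝ} (hx : 0 ≤ x) :
    Summable fun k : ℕ => x ^ k / Real.Gamma ((k : ℝ) * α + α) := by
  obtain ⟨J, B, hJ, hB, hle⟩ := ml_dominate hα hx
  refine Summable.of_nonneg_of_le (fun k => ?_) (fun k => ?_) hB
  · have := Real.Gamma_pos_of_pos (by positivity : 0 < (k : ℝ) * α + α)
    positivity
  · rw [div_eq_mul_inv]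
    have := (mlP_tendsto (by positivity : 0 < (k : ℝ) * α + α)).const_mul (x ^ k)
    refine le_of_tendsto this ?_
    filter_upwards [eventually_ge_atTop J] with n hn using hle n hn k

open Filter Topology in
lemma ml_tendsto {α : ℝ} (hα : 0 < α) {x : ℝ} (hx : 0 ≤ x) :
    Tendsto (fun n : ℕ => (n : ℝ) ^ (1 - α) * mlC α (x * (n : ℝ) ^ (-α)) n) atTop
      (𝓝 (mittagLeffler α α (-x))) := by
  obtain ⟨J, B, hJ, hB, hle⟩ := ml_dominate hα hx
  have key : Tendsto (fun n : ℕ => ∑' k : ℕ, (-x) ^ k *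
      ((n : ℝ) ^ (1 - ((k : ℝ) * α + α)) * mlP ((k : ℝ) * α + α) n)) atTop
      (𝓝 (∑' k : ℕ, (-x) ^ k / Real.Gamma ((k : ℝ) * α + α))) := by
    refine tendsto_tsum_of_dominated_convergence hB (fun k => ?_) ?_
    · rw [div_eq_mul_inv]
      exact (mlP_tendsto (by positivity : 0 < (k : ℝ) * α + α)).const_mul _
    · filter_upwards [eventually_ge_atTop J] with n hn k
      have h1 := mlP_nonneg (by positivity : 0 ≤ (k : ℝ) * α + α) n
      rw [norm_mul, norm_pow, norm_neg, Real.norm_eq_abs, Real.norm_eq_abs, abs_of_nonneg hx,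
        abs_of_nonneg (by positivity)]
      exact hle n hn k
  refine key.congr' ?_
  filter_upwards [eventually_ge_atTop 1] with n hn
  have hn' : (0 : ℝ) < n := by exact_mod_cast hn
  rw [mlC, ← tsum_mul_left]
  refine tsum_congr fun k => ?_
  rw [show 1 - ((k : ℝ) * α + α) = (1 - α) + (-α) * k by ring, Real.rpow_add hn',
    Real.rpow_mul hn'.le, Real.rpow_natCast, ← neg_mul, mul_pow]
  ring

open Filter Topology in
lemma ml_anti {α : ℝ} (hα : 0 < α) (hα1 : α ≤ 1) {x y : ℝ} (hx : 0 ≤ x) (hxy : x ≤ y) :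
    0 ≤ mittagLeffler α α (-y) ∧ mittagLeffler α α (-y) ≤ mittagLeffler α α (-x) := by
  have hy := hx.trans hxy
  have hlim : Tendsto (fun n : ℕ => y * (n : ℝ) ^ (-α)) atTop (𝓝 (y * 0)) :=
    ((tendsto_rpow_neg_atTop hα).comp tendsto_natCast_atTop_atTop).const_mul y
  rw [mul_zero] at hlim
  have hev : ∀ᶠ n : ℕ in atTop, 0 ≤ mlC α (y * (n : ℝ) ^ (-α)) n ∧
      mlC α (y * (n : ℝ) ^ (-α)) n ≤ mlC α (x * (n : ℝ) ^ (-α)) n := by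
    filter_upwards [hlim.eventually_lt_const (zero_lt_one' ℝ)] with n hn
    exact mlC_mono hα hα1 (by positivity) (by gcongr) hn n
  constructor
  · refine ge_of_tendsto (ml_tendsto hα hy) ?_
    filter_upwards [hev] with n hn
    exact mul_nonneg (by positivity) hn.1
  · refine le_of_tendsto_of_tendsto (ml_tendsto hα hy) (ml_tendsto hα hx) ?_
    filter_upwards [hev] with n hn
    exact mul_le_mul_of_nonneg_left hn.2 (by positivity)

lemma ml_analytic {α : ℝ} (hα : 0 < α) : AnalyticOnNhd ℝ (mittagLeffler α α) Set.univ := by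
  set p := FormalMultilinearSeries.ofScalars ℝ (fun k : ℕ => (Real.Gamma ((k : ℝ) * α + α))⁻¹)
    with hp
  have hr : p.radius = ⊤ := by
    apply FormalMultilinearSeries.radius_eq_top_of_summable_norm
    intro r
    refine (ml_summable hα r.2).congr fun k => ?_
    have := Real.Gamma_pos_of_pos (by positivity : 0 < (k : ℝ) * α + α)
    rw [hp, FormalMultilinearSeries.ofScalars_norm, Real.norm_eq_abs,
      abs_of_nonneg (by positivity), div_eq_mul_inv, mul_comm]
    rfl
  have hsum : mittagLeffler α α = p.sum := by
    funext x
    rw [mittagLeffler, FormalMultilinearSeries.sum]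
    refine tsum_congr fun k => ?_
    rw [hp, FormalMultilinearSeries.ofScalars_apply_eq, smul_eq_mul, div_eq_mul_inv, mul_comm]
  have h := p.hasFPowerSeriesOnBall (by rw [hr]; simp)
  rw [hr, ← hsum] at h
  simpa using h.analyticOnNhd

lemma ml_pos {α : ℝ} (hα : 0 < α) (hα1 : α ≤ 1) {x : ℝ} (hx : 0 ≤ x) :
    0 < mittagLeffler α α (-x) := by
  by_contra hcon
  have hz : ∀ y, x ≤ y → mittagLeffler α α (-y) = 0 := fun y hy =>
    le_antisymm ((ml_anti hα hα1 hx hy).2.trans (not_lt.1 hcon)) (ml_anti hα hα1 hx hy).1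
  have hE : mittagLeffler α α = fun _ => 0 := by
    refine (ml_analytic hα).eq_of_eventuallyEq (z₀ := -x - 1) analyticOnNhd_const ?_
    filter_upwards [Iio_mem_nhds (by linarith : -x - 1 < -x)] with y hy
    have := hz (-y) (by have := Set.mem_Iio.1 hy; linarith)
    simpa using this
  have h0 : mittagLeffler α α 0 = (Real.Gamma α)⁻¹ := by
    rw [mittagLeffler, tsum_eq_single 0]
    · simp
    · intro k hk; simp [hk]
  rw [hE] at h0
  have := Real.Gamma_pos_of_pos hα
  have : 0 < (Real.Gamma α)⁻¹ := by positivity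
  linarith

theorem integral_lower_bound (α lam T : ℝ) (hα0 : 0 < α) (hα1 : α ≤ 1)
    (hlam : 0 < lam) (hT : 0 < T)
    (h : ℝ → ℝ) (hmeas : Measurable h)
    (hbdd : ∃ M : ℝ, ∀ᵐ τ ∂(volume.restrict (Set.Ioo 0 T)), |h τ| ≤ M)
    (ch : ℝ) (hch : 0 < ch)
    (hlower : ∀ᵐ τ ∂(volume.restrict (Set.Ioo 0 T)), ch ≤ h τ) :
    ch * T ^ α * mittagLeffler α α (-lam * T ^ α)
      ≤ (∫ τ in (0:ℝ)..T,
          (T - τ) ^ (α - 1) * mittagLeffler α α (-lam * (T - τ) ^ α) * h τ) ∧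
    0 < ch * T ^ α * mittagLeffler α α (-lam * T ^ α) := by
  have hposT : 0 < mittagLeffler α α (-lam * T ^ α) := by
    rw [neg_mul]; exact ml_pos hα0 hα1 (by positivity)
  refine ⟨?_, by positivity⟩
  obtain ⟨M, hM⟩ := hbdd
  have hcont : Continuous (mittagLeffler α α) :=
    continuousOn_univ.1 (ml_analytic hα0).continuousOn
  have hint1 : IntegrableOn (fun τ : ℝ => (T - τ) ^ (α - 1)) (Set.Ioo 0 T) := by
    have h1 : IntervalIntegrable (fun t : ℝ => t ^ (α - 1)) volume 0 T :=
      intervalIntegral.intervalIntegrable_rpow' (by linarith)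
    have h2 := (h1.comp_sub_left T).symm
    simp only [sub_zero, sub_self] at h2
    exact ((intervalIntegrable_iff_integrableOn_Ioo_of_le hT.le).1 h2)
  have hmE : Measurable fun τ : ℝ => mittagLeffler α α (-lam * (T - τ) ^ α) :=
    hcont.measurable.comp (by fun_prop)
  have hint2 : IntegrableOn (fun τ : ℝ => (T - τ) ^ (α - 1) *
      mittagLeffler α α (-lam * (T - τ) ^ α)) (Set.Ioo 0 T) := by
    refine Integrable.mul_bdd (c := mittagLeffler α α (-0)) hint1 hmE.aestronglyMeasurable ?_
    filter_upwards [ae_restrict_mem measurableSet_Ioo] with τ hτ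
    have h0 : 0 ≤ T - τ := by linarith [hτ.2]
    have := ml_anti hα0 hα1 le_rfl (by positivity : 0 ≤ lam * (T - τ) ^ α)
    rw [neg_mul, Real.norm_eq_abs, abs_of_nonneg this.1]
    exact this.2
  have hint3 : IntegrableOn (fun τ : ℝ => (T - τ) ^ (α - 1) *
      mittagLeffler α α (-lam * (T - τ) ^ α) * h τ) (Set.Ioo 0 T) :=
    Integrable.mul_bdd (c := M) hint2 hmeas.aestronglyMeasurable hM
  rw [intervalIntegral.integral_of_le hT.le, integral_Ioc_eq_integral_Ioo]
  have hc : ch * T ^ α * mittagLeffler α α (-lam * T ^ α) =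
      ∫ τ in Set.Ioo 0 T, T ^ (α - 1) * mittagLeffler α α (-lam * T ^ α) * ch := by
    rw [setIntegral_const, Measure.real, Real.volume_Ioo, sub_zero, ENNReal.toReal_ofReal hT.le,
      smul_eq_mul, Real.rpow_sub_one hT.ne']
    field_simp
  rw [hc]
  refine integral_mono_ae (integrable_const _) hint3 ?_
  filter_upwards [ae_restrict_mem measurableSet_Ioo, hlower] with τ hτ hl
  have h0 : 0 < T - τ := by linarith [hτ.2]
  have h1 : T - τ ≤ T := by linarith [hτ.1]
  have e1 : T ^ (α - 1) ≤ (T - τ) ^ (α - 1) :=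
    Real.rpow_le_rpow_of_nonpos h0 h1 (by linarith)
  have e2 : mittagLeffler α α (-lam * T ^ α) ≤ mittagLeffler α α (-lam * (T - τ) ^ α) := by
    rw [neg_mul, neg_mul]
    exact (ml_anti hα0 hα1 (by positivity) (by gcongr)).2
  have e3 := hposT.le.trans e2
  gcongr
end
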